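/- arXiv:2501.13729 — 2 statements merged into one kernel-verified Lean document; each statement's English description precedes it below -/
import Mathlib

section
/- Let 𝒜 = (A_i)_{i∈I} be a uniformly hyperbolic finite family in SL₂(ℝ). Then there exists ρ ∈ (0,1] such that for all nonempty finite words i and i' over I, ‖A_{i'}·A_i‖ ≥ ρ·‖A_{i'}‖·‖A_i‖. -/
/-!
The proof is a quantitative version of the existence of a dominated splitting.

For unit vectors write `|x ∧ y|` for the sine of the angle between their lines. If `e` is the unit
vector most contracted by `U`, and `f` the one most contracted by `V⁻¹`, then
`‖U V‖ ≥ |e ∧ f| ‖U‖ ‖V‖` (`wedge_mul_nrm_le`), so it is enough to bound `|e ∧ f|` from below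
when `U`, `V` are products along words `u`, `v` with large norm. When one of the norms is at most
`R`, the bound with constant `R⁻²` is immediate (`mul_nrm_le_of_nrm_le`).

Let `M > 1` bound the norms of the generators and let `R = M ^ K`. Take the longest suffix `u'` of
`u` and the longest prefix `v'` of `v` whose products have norm at most `R`; both have length at
least `K`. The directions most contracted by the products `g_k` along suffixes of `u` of length
`k` form a sequence with steps at most `M / (‖g_k‖ ‖g_{k+1}‖)`. Past `u'` every norm
exceeds `R`, and norms also grow exponentially,
so only `O(K)` steps have size comparable to `R⁻²` and the rest form a geometric
tail. Hence `‖U' e‖ = O(K / R)`, and likewise `‖V'⁻¹ f‖ = O(K / R)`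
(`contraction_at_last_time`). This gives `‖U' V'‖ ≤ O(K) + R² |e ∧ f|`
(`nrm_mul_le_of_contracted`), whereas uniform hyperbolicity along the word `u' v'` gives
`‖U' V'‖ ≥ c r ^ K`. For one fixed large `K` this forces `|e ∧ f| ≥ R⁻²`.
-/

open MeasureTheory Filter Set Topology

namespace Paper

noncomputable section

abbrev Mat2 : Type := Matrix (Fin 2) (Fin 2) ℝ
abbrev SL2 : Type := Matrix.SpecialLinearGroup (Fin 2) ℝ

/-- The operator norm on 2×2 real matrices induced by the Euclidean norm on ℝ². -/
def opNorm (M : Mat2) : ℝ := ‖(Matrix.toEuclideanLin M).toContinuousLinearMap‖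

/-- The product `A_{i₁} ⋯ A_{i_n}` of the matrices along a word `w = (i₁, …, i_n)`. -/
def wordProd {ι : Type*} (A : ι → SL2) (w : List ι) : SL2 := (w.map A).prod

/-- The product `p_{i₁} ⋯ p_{i_n}` of the weights along a word `w = (i₁, …, i_n)`. -/
def wordWeight {ι : Type*} (p : ι → ℝ) (w : List ι) : ℝ := (w.map p).prod

/-- A finite family in SL₂(ℝ) is uniformly hyperbolic if `‖A_i‖ ≥ c rⁿ` for all words of
length `n ≥ 1`. -/
def UniformlyHyperbolic {ι : Type*} (A : ι → SL2) : Prop :=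
  ∃ c > (0:ℝ), ∃ r > (1:ℝ), ∀ w : List ι, w ≠ [] →
    c * r ^ w.length ≤ opNorm (wordProd A w : Mat2)

/-- Strongly Diophantine: distinct words of the same length give matrices that are
exponentially separated. -/
def StronglyDiophantine {ι : Type*} (A : ι → SL2) : Prop :=
  ∃ c ∈ Set.Ioo (0:ℝ) 1, ∀ w w' : List ι, w ≠ [] → w.length = w'.length → w ≠ w' →
    c ^ w.length ≤ opNorm ((wordProd A w : Mat2) - (wordProd A w' : Mat2))

/-- The real projective line. -/
abbrev RP1 : Type := Projectivization ℝ (Fin 2 → ℝ)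

lemma cos_sin_ne_zero (θ : ℝ) : ![Real.cos θ, Real.sin θ] ≠ 0 := by
  intro h
  have h0 : Real.cos θ = 0 := by simpa using congrFun h 0
  have h1 : Real.sin θ = 0 := by simpa using congrFun h 1
  have h2 := Real.sin_sq_add_cos_sq θ
  rw [h0, h1] at h2
  norm_num at h2

/-- The point of ℝP¹ in the direction of angle `θ`. -/
def dir (θ : ℝ) : RP1 := Projectivization.mk ℝ ![Real.cos θ, Real.sin θ] (cos_sin_ne_zero θ)

/-- The quotient topology on ℝP¹ (expressed through the angle parametrization). -/
instance : TopologicalSpace RP1 := TopologicalSpace.coinduced dir inferInstance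

/-- The Borel σ-algebra on ℝP¹. -/
instance : MeasurableSpace RP1 := borel RP1

/-- The natural action of `A ∈ SL₂(ℝ)` on ℝP¹, `A·[v] = [Av]`. -/
def pact (A : SL2) : RP1 → RP1 :=
  Projectivization.map (Matrix.SpecialLinearGroup.toLin' A).toLinearMap
    (Matrix.SpecialLinearGroup.toLin' A).injective

/-- `K` is the attractor of the family `A`: the (unique) nonempty compact set with
`K = ⋃ᵢ Aᵢ·K`. -/
def IsAttractor {ι : Type*} [Fintype ι] (A : ι → SL2) (K : Set RP1) : Prop :=
  K.Nonempty ∧ IsCompact K ∧ K = ⋃ i : ι, pact (A i) '' K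

/-- `ν` is stationary for the family `A` with weights `p`: `ν = Σ_i p_i (A_i)_* ν`. -/
def IsStationary {ι : Type*} [Fintype ι] (A : ι → SL2) (p : ι → ℝ) (ν : Measure RP1) : Prop :=
  ν = ∑ i : ι, ENNReal.ofReal (p i) • Measure.map (pact (A i)) ν

/-- The `k`-th arc of the `2^{-m}` dyadic partition of ℝP¹. -/
def dyadic (m k : ℕ) : Set RP1 :=
  dir '' Set.Ico (Real.pi * k / 2 ^ m) (Real.pi * (k + 1) / 2 ^ m)

/-- The concentric doubled arc `2I` of the `k`-th arc of the `2^{-m}` dyadic partition. -/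
def dyadic2 (m k : ℕ) : Set RP1 :=
  dir '' Set.Ico (Real.pi * ((k : ℝ) - 1 / 2) / 2 ^ m) (Real.pi * ((k : ℝ) + 3 / 2) / 2 ^ m)

/-- `Σ_{I ∈ 𝒟_m} ν(I)^q`. -/
def lqSum (ν : Measure RP1) (q : ℝ) (m : ℕ) : ℝ :=
  ∑ k ∈ Finset.range (2 ^ m), ((ν (dyadic m k)).toReal) ^ q

/-- The L^q spectrum `τ(ν,q) = liminf_m −(1/m) log₂ Σ_{I∈𝒟_m} ν(I)^q`. -/
def lqSpectrum (ν : Measure RP1) (q : ℝ) : ℝ :=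
  Filter.liminf (fun m : ℕ => -(1 / (m : ℝ)) * Real.logb 2 (lqSum ν q m)) Filter.atTop

/-- `(1/n) log₂ Σ_{i ∈ Iⁿ} p_i^q ‖A_i‖^{2s}`, the `n`-th approximant of the pressure
`Ψ_q(s)`. -/
def psiAvg {ι : Type*} [Fintype ι] (A : ι → SL2) (p : ι → ℝ) (q s : ℝ) (n : ℕ) : ℝ :=
  (1 / (n : ℝ)) * Real.logb 2
    (∑ w : Fin n → ι,
      (wordWeight p (List.ofFn w)) ^ q * (opNorm (wordProd A (List.ofFn w) : Mat2)) ^ (2 * s))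

/-- `t = τ̃(q)`: `t` is the unique positive zero of the pressure function `Ψ_q`. -/
def IsPressureZero {ι : Type*} [Fintype ι] (A : ι → SL2) (p : ι → ℝ) (q t : ℝ) : Prop :=
  0 < t ∧
  Filter.Tendsto (fun n => psiAvg A p q t n) Filter.atTop (nhds 0) ∧
  ∀ s : ℝ, 0 < s → Filter.Tendsto (fun n => psiAvg A p q s n) Filter.atTop (nhds 0) → s = t

/-- The angle metric on ℝP¹: `d([v],[w]) = arccos(|⟨v,w⟩| / (‖v‖ ‖w‖))`. -/
def pdist (x y : RP1) : ℝ :=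
  Real.arccos (|x.rep 0 * y.rep 0 + x.rep 1 * y.rep 1| /
    (Real.sqrt (x.rep 0 ^ 2 + x.rep 1 ^ 2) * Real.sqrt (y.rep 0 ^ 2 + y.rep 1 ^ 2)))

/-- The open ball in ℝP¹ of radius `r` and center `x`. -/
def pball (x : RP1) (r : ℝ) : Set RP1 := {y | pdist x y < r}

instance : Fact (0 < Real.pi) := ⟨Real.pi_pos⟩

/-- The angle coordinate `Θ : ℝP¹ → ℝ/πℤ`. -/
def theta (x : RP1) : AddCircle Real.pi :=
  ((Complex.arg ((x.rep 0 : ℂ) + (x.rep 1 : ℂ) * Complex.I) : ℝ) : AddCircle Real.pi)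

/-- `w` is a `2^m` stopping word for the family `A`. -/
def IsStopping {ι : Type*} (A : ι → SL2) (m : ℕ) (w : List ι) : Prop :=
  w ≠ [] ∧
  (∀ j : ℕ, 1 ≤ j → j < w.length → opNorm (wordProd A (w.take j) : Mat2) ^ 2 < (2:ℝ) ^ m) ∧
  (2 : ℝ) ^ m ≤ opNorm (wordProd A w : Mat2) ^ 2

/-- `Σ_{i ∈ Ω_m} p_i^q`, the `L^q` sum over the `2^m` stopping words. -/
def stopSum {ι : Type*} [Fintype ι] (A : ι → SL2) (p : ι → ℝ) (q : ℝ) (m : ℕ) : ℝ :=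
  ∑' w : List ι,
    Set.indicator {w : List ι | IsStopping A m w} (fun w => (wordWeight p w) ^ q) w

/-- `Σ_{J ∈ 𝒟_{s+m}(I)} ν(J)^q` for `I` the `k`-th arc of `𝒟_s`. -/
def localSum (ν : Measure RP1) (q : ℝ) (s m k : ℕ) : ℝ :=
  ∑ j ∈ Finset.range (2 ^ (s + m)),
    Set.indicator {j : ℕ | (dyadic (s + m) j ∩ dyadic s k).Nonempty}
      (fun j => (ν (dyadic (s + m) j)).toReal ^ q) j


/-! ### The action of `SL₂(ℝ)` on the Euclidean plane -/

/-- The Euclidean plane. -/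
abbrev Plane : Type := EuclideanSpace ℝ (Fin 2)

/-- The action of an element of `SL₂(ℝ)` on the Euclidean plane. -/
def actL (A : SL2) : Plane →L[ℝ] Plane :=
  (Matrix.toEuclideanLin (A : Mat2)).toContinuousLinearMap

/-- The operator norm of an element of `SL₂(ℝ)`. -/
def nrm (A : SL2) : ℝ := opNorm (A : Mat2)

/-- The determinant of the pair `(x, y)`; for unit vectors its absolute value is the sine of the
angle between the lines they span. -/
def wedge (x y : Plane) : ℝ := x 0 * y 1 - x 1 * y 0

/-- Rotation by a quarter turn. -/
def rot (x : Plane) : Plane := !₂[-x 1, x 0]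

lemma norm_sq_plane (x : Plane) : ‖x‖ ^ 2 = x 0 ^ 2 + x 1 ^ 2 := by
  rw [EuclideanSpace.norm_sq_eq]
  simp [Fin.sum_univ_two]

lemma norm_rot (x : Plane) : ‖rot x‖ = ‖x‖ := by
  rw [← sq_eq_sq₀ (norm_nonneg _) (norm_nonneg _), norm_sq_plane, norm_sq_plane]
  simp [rot]
  ring

lemma abs_wedge_le (x y : Plane) : |wedge x y| ≤ ‖x‖ * ‖y‖ := by
  refine abs_le_of_sq_le_sq ?_ (by positivity)
  rw [mul_pow, norm_sq_plane, norm_sq_plane, wedge]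
  nlinarith [sq_nonneg (x 0 * y 0 + x 1 * y 1)]

lemma actL_apply_zero (A : SL2) (x : Plane) : actL A x 0 = A 0 0 * x 0 + A 0 1 * x 1 := by
  simp [actL, Matrix.toEuclideanLin, Matrix.toLpLin_apply]

lemma actL_apply_one (A : SL2) (x : Plane) : actL A x 1 = A 1 0 * x 0 + A 1 1 * x 1 := by
  simp [actL, Matrix.toEuclideanLin, Matrix.toLpLin_apply]

lemma actL_mul (A B : SL2) (x : Plane) : actL (A * B) x = actL A (actL B x) := by
  simp [actL, Matrix.toEuclideanLin, Matrix.toLpLin_apply]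

lemma actL_one (x : Plane) : actL 1 x = x := by
  simp [actL, Matrix.toEuclideanLin]

lemma actL_inv_actL (A : SL2) (x : Plane) : actL A⁻¹ (actL A x) = x := by
  rw [← actL_mul, inv_mul_cancel, actL_one]

lemma actL_actL_inv (A : SL2) (x : Plane) : actL A (actL A⁻¹ x) = x := by
  rw [← actL_mul, mul_inv_cancel, actL_one]

lemma wedge_actL (A : SL2) (x y : Plane) : wedge (actL A x) (actL A y) = wedge x y := by
  have h := A.det_coe
  rw [Matrix.det_fin_two] at h
  simp only [wedge, actL_apply_zero, actL_apply_one]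
  linear_combination (x 0 * y 1 - x 1 * y 0) * h

lemma nrm_nonneg (A : SL2) : 0 ≤ nrm A := norm_nonneg _

lemma norm_actL_le (A : SL2) (x : Plane) : ‖actL A x‖ ≤ nrm A * ‖x‖ := (actL A).le_opNorm x

lemma nrm_le {A : SL2} {C : ℝ} (hC : 0 ≤ C) (h : ∀ x, ‖actL A x‖ ≤ C * ‖x‖) : nrm A ≤ C :=
  (actL A).opNorm_le_bound hC h

lemma nrm_mul_le (A B : SL2) : nrm (A * B) ≤ nrm A * nrm B := by
  refine nrm_le (mul_nonneg (nrm_nonneg _) (nrm_nonneg _)) fun x => ?_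
  rw [actL_mul, mul_assoc]
  exact (norm_actL_le _ _).trans
    (mul_le_mul_of_nonneg_left (norm_actL_le _ _) (nrm_nonneg _))

lemma nrm_inv_le (A : SL2) : nrm A⁻¹ ≤ nrm A := by
  refine nrm_le (nrm_nonneg _) fun x => ?_
  set z := actL A⁻¹ x with hz
  -- `‖z‖² = z ∧ rot z = x ∧ A (rot z)`
  have h1 : ‖z‖ ^ 2 = wedge x (actL A (rot z)) := by
    rw [← actL_actL_inv A x, wedge_actL, norm_sq_plane, ← hz]
    simp [wedge, rot]
    ring
  have h2 : ‖z‖ ^ 2 ≤ ‖x‖ * (nrm A * ‖z‖) := by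
    rw [h1]
    refine (le_abs_self _).trans ((abs_wedge_le _ _).trans ?_)
    gcongr
    exact (norm_actL_le _ _).trans_eq (by rw [norm_rot])
  rcases (norm_nonneg z).eq_or_lt with h0 | h0
  · rw [← h0]
    exact mul_nonneg (nrm_nonneg _) (norm_nonneg _)
  · nlinarith

lemma nrm_inv (A : SL2) : nrm A⁻¹ = nrm A :=
  (nrm_inv_le A).antisymm (by simpa using nrm_inv_le A⁻¹)

lemma nrm_one : nrm 1 = 1 := by
  have : actL 1 = ContinuousLinearMap.id ℝ Plane := by
    ext1 x
    exact actL_one x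
  change ‖actL 1‖ = 1
  rw [this, ContinuousLinearMap.norm_id]

lemma one_le_nrm (A : SL2) : 1 ≤ nrm A := by
  have h := nrm_mul_le A A⁻¹
  rw [mul_inv_cancel, nrm_one, nrm_inv] at h
  nlinarith [nrm_nonneg A]

lemma nrm_pos (A : SL2) : 0 < nrm A := one_pos.trans_le (one_le_nrm A)

/-! ### Most contracted directions -/

/-- The most contracted direction of `A`, contracted by the factor `‖A‖⁻¹`. -/
lemma exists_contracted (A : SL2) : ∃ e : Plane, ‖e‖ = 1 ∧ nrm A * ‖actL A e‖ = 1 := by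
  obtain ⟨y, hy, hmax⟩ := (isCompact_sphere (0 : Plane) 1).exists_isMaxOn
    (NormedSpace.sphere_nonempty.2 zero_le_one)
    ((actL A⁻¹).continuous.norm.continuousOn)
  have hy1 : ‖y‖ = 1 := by simpa using hy
  have h1 : nrm A⁻¹ ≤ ‖actL A⁻¹ y‖ := by
    refine nrm_le (norm_nonneg _) fun x => ?_
    rcases eq_or_ne x 0 with rfl | hx
    · simp
    have hx' : 0 < ‖x‖ := norm_pos_iff.2 hx
    have := hmax (show ‖x‖⁻¹ • x ∈ Metric.sphere (0 : Plane) 1 by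
      simp [norm_smul, hx'.ne'])
    simp only [Set.mem_ofPred_eq, map_smul, norm_smul, norm_inv, norm_norm] at this
    rwa [inv_mul_le_iff₀ hx', mul_comm] at this
  have h2 : ‖actL A⁻¹ y‖ = nrm A := by
    rw [← nrm_inv A]
    exact ((norm_actL_le _ _).trans_eq (by rw [hy1, mul_one])).antisymm h1
  have h0 := nrm_pos A
  refine ⟨(nrm A)⁻¹ • actL A⁻¹ y, ?_, ?_⟩
  · rw [norm_smul, h2, norm_inv, Real.norm_of_nonneg h0.le, inv_mul_cancel₀ h0.ne']
  · rw [map_smul, actL_actL_inv, norm_smul, hy1, norm_inv, Real.norm_of_nonneg h0.le, mul_one,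
      mul_inv_cancel₀ h0.ne']

/-- A unit vector spanning the most contracted direction of `A`. -/
def ctr (A : SL2) : Plane := (exists_contracted A).choose

lemma norm_ctr (A : SL2) : ‖ctr A‖ = 1 := (exists_contracted A).choose_spec.1

lemma norm_actL_ctr (A : SL2) : ‖actL A (ctr A)‖ = (nrm A)⁻¹ :=
  eq_inv_of_mul_eq_one_right (exists_contracted A).choose_spec.2

/-- Expansion of `x` in the orthonormal basis `e`, `rot e`. -/
lemma plane_decomp {e : Plane} (he : ‖e‖ = 1) (x : Plane) :
    x = (x 0 * e 0 + x 1 * e 1) • e + wedge e x • rot e := by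
  have h : e 0 ^ 2 + e 1 ^ 2 = 1 := by rw [← norm_sq_plane, he, one_pow]
  ext i
  fin_cases i
  · simp [wedge, rot]
    linear_combination (-x 0) * h
  · simp [wedge, rot]
    linear_combination (-x 1) * h

lemma abs_dot_le {e : Plane} (he : ‖e‖ = 1) (x : Plane) : |x 0 * e 0 + x 1 * e 1| ≤ ‖x‖ := by
  have h : e 0 ^ 2 + e 1 ^ 2 = 1 := by rw [← norm_sq_plane, he, one_pow]
  refine abs_le_of_sq_le_sq ?_ (norm_nonneg _)
  rw [norm_sq_plane]
  nlinarith [sq_nonneg (x 0 * e 1 - x 1 * e 0)]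

/-- If `A` contracts the unit vector `e`, it stretches `x` little when `x` is nearly parallel to
`e`. -/
lemma norm_actL_le_of_unit (A : SL2) {e : Plane} (he : ‖e‖ = 1) (x : Plane) :
    ‖actL A x‖ ≤ ‖x‖ * ‖actL A e‖ + |wedge e x| * nrm A := by
  conv_lhs => rw [plane_decomp he x]
  rw [map_add, map_smul, map_smul]
  refine (norm_add_le _ _).trans ?_
  rw [norm_smul, norm_smul, Real.norm_eq_abs, Real.norm_eq_abs]
  gcongr
  · exact abs_dot_le he x
  · simpa [norm_rot, he] using norm_actL_le A (rot e)

/-- Subadditivity of `|sin|` of the angle. -/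
lemma abs_wedge_triangle {a b c : Plane} (ha : ‖a‖ = 1) (hb : ‖b‖ = 1) (hc : ‖c‖ = 1) :
    |wedge a c| ≤ |wedge a b| + |wedge b c| := by
  have h : b 0 ^ 2 + b 1 ^ 2 = 1 := by rw [← norm_sq_plane, hb, one_pow]
  have key : wedge a c = (c 0 * b 0 + c 1 * b 1) * wedge a b
      + (a 0 * b 0 + a 1 * b 1) * wedge b c := by
    simp only [wedge]
    linear_combination (-(a 0 * c 1 - a 1 * c 0)) * h
  rw [key]
  refine (abs_add_le _ _).trans ?_
  rw [abs_mul, abs_mul]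
  have h1 := abs_dot_le hb c
  have h2 := abs_dot_le hb a
  rw [hc] at h1
  rw [ha] at h2
  exact add_le_add (mul_le_of_le_one_left (abs_nonneg _) h1)
    (mul_le_of_le_one_left (abs_nonneg _) h2)

/-- Matrices of large norm that differ by a bounded left factor have close contracted
directions. -/
lemma abs_wedge_ctr_le (A B : SL2) :
    |wedge (ctr A) (ctr B)| ≤ nrm (B * A⁻¹) / (nrm A * nrm B) := by
  rw [← wedge_actL A]
  refine (abs_wedge_le _ _).trans ?_
  have h : actL A (ctr B) = actL (B * A⁻¹)⁻¹ (actL B (ctr B)) := by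
    rw [← actL_mul]
    simp
  have h2 : ‖actL A (ctr B)‖ ≤ nrm (B * A⁻¹) * (nrm B)⁻¹ := by
    rw [h, ← norm_actL_ctr B, ← nrm_inv (B * A⁻¹)]
    exact norm_actL_le _ _
  rw [norm_actL_ctr]
  calc (nrm A)⁻¹ * ‖actL A (ctr B)‖ ≤ (nrm A)⁻¹ * (nrm (B * A⁻¹) * (nrm B)⁻¹) := by
        have := nrm_pos A
        gcongr
    _ = _ := by
        have := (nrm_pos A).ne'
        have := (nrm_pos B).ne'
        field_simp

/-- Natural subtraction makes the terms with `k < T` equal to `1`; the others form a geometric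
tail. -/
lemma sum_pow_tsub_le {q : ℝ} (hq0 : 0 ≤ q) (hq1 : q < 1) (T a b : ℕ) :
    ∑ k ∈ Finset.Ico a b, q ^ (k - T) ≤ T + (1 - q)⁻¹ := by
  have hsub : Finset.Ico a b ⊆ Finset.range (T + b) := by
    intro k hk
    simp only [Finset.mem_Ico, Finset.mem_range] at *
    omega
  refine (Finset.sum_le_sum_of_subset_of_nonneg hsub fun _ _ _ => pow_nonneg hq0 _).trans ?_
  rw [Finset.sum_range_add]
  refine add_le_add ?_ ?_
  · refine (Finset.sum_le_card_nsmul _ _ 1 fun k _ => pow_le_one₀ hq0 hq1.le).trans ?_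
    simp
  · simp only [Nat.add_sub_cancel_left]
    rw [← tsum_geometric_of_lt_one hq0 hq1]
    exact (summable_geometric_of_lt_one hq0 hq1).sum_le_tsum _ fun _ _ => pow_nonneg hq0 _

/-! ### Convergence of contracted directions along a sequence of products -/

/-- Let `g₀ = 1, g₁, …, g_N` have bounded increments and norms growing at least exponentially.
At the last time `m` at which `‖g_m‖ ≤ R = M ^ K`, the direction `e` most contracted by the final
matrix `g_N` is already contracted by `g_m` to size `O(K / R)`: consecutive contracted directions
are at angle at most `M / (‖g_k‖ ‖g_{k+1}‖)`, which for `k ≥ m` is `O(R⁻²)`, and decays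
geometrically once `k ≥ L * K`. -/
lemma contraction_at_last_time {M c r : ℝ} {L K N : ℕ} (hM : 1 < M) (hc : 0 < c) (hc1 : c ≤ 1)
    (hr : 1 < r) (hL : M ≤ r ^ L) (g : ℕ → SL2) (g0 : g 0 = 1)
    (hstep : ∀ n < N, nrm (g (n + 1) * (g n)⁻¹) ≤ M)
    (hgrow : ∀ n ≤ N, c * r ^ n ≤ nrm (g n)) (hN : M ^ K < nrm (g N)) :
    ∃ m ≤ N, K ≤ m ∧ nrm (g m) ≤ M ^ K ∧
      M ^ K * ‖actL (g m) (ctr (g N))‖ ≤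
        M + M ^ 2 / c ^ 2 * (((L * K : ℕ) : ℝ) + (1 - r⁻¹)⁻¹) := by
  have hM0 : 0 < M := one_pos.trans hM
  have hr0 : 0 < r := one_pos.trans hr
  set R := M ^ K with hR
  have hR0 : 0 < R := pow_pos hM0 K
  have hR1 : 1 ≤ R := one_le_pow₀ hM.le
  have hsucc : ∀ n < N, nrm (g (n + 1)) ≤ M * nrm (g n) := by
    intro n hn
    calc nrm (g (n + 1)) = nrm (g (n + 1) * (g n)⁻¹ * g n) := by simp
      _ ≤ nrm (g (n + 1) * (g n)⁻¹) * nrm (g n) := nrm_mul_le _ _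
      _ ≤ _ := mul_le_mul_of_nonneg_right (hstep n hn) (nrm_nonneg _)
  have hupper : ∀ n ≤ N, nrm (g n) ≤ M ^ n := by
    intro n
    induction n with
    | zero => intro _; simp [g0, nrm_one]
    | succ n ih =>
      intro hn
      rw [pow_succ']
      exact (hsucc n (by omega)).trans (mul_le_mul_of_nonneg_left (ih (by omega)) hM0.le)
  classical
  -- the last time at which the norm is at most `R`
  set m := Nat.findGreatest (fun n => nrm (g n) ≤ R) N with hm
  have hmN : m ≤ N := Nat.findGreatest_le N
  have hmR : nrm (g m) ≤ R :=
    Nat.findGreatest_spec (P := fun n => nrm (g n) ≤ R) (Nat.zero_le N)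
      (by rw [g0, nrm_one]; exact hR1)
  have hlast : ∀ n, m < n → n ≤ N → R < nrm (g n) := fun n h1 h2 =>
    not_le.1 (Nat.findGreatest_is_greatest h1 h2)
  have hmN' : m < N := lt_of_le_of_ne hmN fun h => by
    rw [h] at hmR
    exact absurd hN (not_lt.2 hmR)
  have hge : ∀ k, m ≤ k → k < N → R ≤ M * nrm (g k) := fun k h1 h2 =>
    (hlast (k + 1) (by omega) (by omega)).le.trans (hsucc k h2)
  have hKm : K ≤ m := by
    have h := (hlast (m + 1) (by omega) (by omega)).trans_le (hupper (m + 1) (by omega))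
    have := (pow_lt_pow_iff_right₀ hM).1 h
    omega
  have hangle : ∀ k, m ≤ k → k < N →
      R ^ 2 * |wedge (ctr (g k)) (ctr (g (k + 1)))| ≤ M ^ 2 / c ^ 2 * r⁻¹ ^ (k - L * K) := by
    intro k h1 h2
    have hk := nrm_pos (g k)
    have hk1 := nrm_pos (g (k + 1))
    have hb : |wedge (ctr (g k)) (ctr (g (k + 1)))| ≤ M / (nrm (g k) * nrm (g (k + 1))) :=
      (abs_wedge_ctr_le _ _).trans (by gcongr; exact hstep k h2)
    rw [inv_pow, ← div_eq_mul_inv, div_div]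
    -- For `k ≤ L * K` the two norms are at least `R / M` and `R`; afterwards exponential growth
    -- takes over, since `R ≤ r ^ (L * K)`.
    have key : R ^ 2 * (c ^ 2 * r ^ (k - L * K)) ≤ M * (nrm (g k) * nrm (g (k + 1))) := by
      rcases le_total k (L * K) with hkT | hkT
      · rw [Nat.sub_eq_zero_of_le hkT, pow_zero, mul_one]
        calc R ^ 2 * c ^ 2 ≤ R ^ 2 * 1 := by
              gcongr
              exact pow_le_one₀ hc.le hc1
          _ = R * R := by ring
          _ ≤ (M * nrm (g k)) * nrm (g (k + 1)) := by
              gcongr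
              · exact hge k h1 h2
              · exact (hlast (k + 1) (by omega) (by omega)).le
          _ = _ := by ring
      · obtain ⟨j, rfl⟩ := Nat.exists_eq_add_of_le hkT
        rw [Nat.add_sub_cancel_left]
        have hRT : R ≤ r ^ (L * K) := by
          rw [pow_mul]
          exact pow_le_pow_left₀ hM0.le hL K
        have e1 : R * (c * r ^ j) ≤ nrm (g (L * K + j)) := by
          refine le_trans ?_ (hgrow _ h2.le)
          rw [pow_add]
          have : 0 < c * r ^ j := by positivity
          nlinarith
        have e2 : R * c ≤ nrm (g (L * K + j + 1)) := by
          refine le_trans ?_ (hgrow _ h2)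
          have : r ^ (L * K) ≤ r ^ (L * K + j + 1) := pow_le_pow_right₀ hr.le (by omega)
          nlinarith
        calc R ^ 2 * (c ^ 2 * r ^ j) = 1 * ((R * (c * r ^ j)) * (R * c)) := by ring
          _ ≤ M * (nrm (g (L * K + j)) * nrm (g (L * K + j + 1))) := by gcongr
    calc R ^ 2 * |wedge (ctr (g k)) (ctr (g (k + 1)))|
        ≤ R ^ 2 * (M / (nrm (g k) * nrm (g (k + 1)))) := by gcongr
      _ ≤ M ^ 2 / (c ^ 2 * r ^ (k - L * K)) := by
        rw [mul_div_assoc', div_le_div_iff₀ (by positivity) (by positivity)]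
        nlinarith
  have htotal : ∀ p, m ≤ p → p ≤ N → R ^ 2 * |wedge (ctr (g m)) (ctr (g p))| ≤
      ∑ k ∈ Finset.Ico m p, M ^ 2 / c ^ 2 * r⁻¹ ^ (k - L * K) := by
    intro p hp
    induction p, hp using Nat.le_induction with
    | base => intro _; simp [wedge, mul_comm]
    | succ p hp ih =>
      intro hpN
      rw [Finset.sum_Ico_succ_top hp]
      refine le_trans ?_ (add_le_add (ih (by omega)) (hangle p hp (by omega)))
      rw [← mul_add]
      exact mul_le_mul_of_nonneg_left
        (abs_wedge_triangle (norm_ctr _) (norm_ctr _) (norm_ctr _)) (by positivity)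
  refine ⟨m, hmN, hKm, hmR, ?_⟩
  have h1 := norm_actL_le_of_unit (g m) (norm_ctr (g m)) (ctr (g N))
  rw [norm_ctr, one_mul, norm_actL_ctr] at h1
  have h2 : R * (nrm (g m))⁻¹ ≤ M := by
    rw [← div_eq_mul_inv, div_le_iff₀ (nrm_pos _)]
    exact hge m le_rfl hmN'
  have h3 : R ^ 2 * |wedge (ctr (g m)) (ctr (g N))| ≤
      M ^ 2 / c ^ 2 * (((L * K : ℕ) : ℝ) + (1 - r⁻¹)⁻¹) := by
    refine (htotal N hmN le_rfl).trans ?_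
    rw [← Finset.mul_sum]
    exact mul_le_mul_of_nonneg_left
      (sum_pow_tsub_le (by positivity) (inv_lt_one_of_one_lt₀ hr) _ _ _) (by positivity)
  calc R * ‖actL (g m) (ctr (g N))‖
      ≤ R * ((nrm (g m))⁻¹ + |wedge (ctr (g m)) (ctr (g N))| * nrm (g m)) := by gcongr
    _ ≤ R * ((nrm (g m))⁻¹ + |wedge (ctr (g m)) (ctr (g N))| * R) := by gcongr
    _ = R * (nrm (g m))⁻¹ + R ^ 2 * |wedge (ctr (g m)) (ctr (g N))| := by ring
    _ ≤ _ := add_le_add h2 h3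

/-! ### Almost multiplicativity -/

lemma exists_linear_le_pow {c r : ℝ} (hc : 0 < c) (hr : 1 < r) (a b : ℝ) :
    ∃ K : ℕ, a * K + b ≤ c * r ^ K := by
  have h1 := (tendsto_pow_const_div_const_pow_of_one_lt 1 hr).const_mul a
  have h2 := (tendsto_pow_const_div_const_pow_of_one_lt 0 hr).const_mul b
  have h := h1.add h2
  simp only [mul_zero, add_zero] at h
  obtain ⟨K, hK⟩ := (h.eventually_lt_const hc).exists
  refine ⟨K, ?_⟩
  have hp : 0 < r ^ K := pow_pos (one_pos.trans hr) K
  rw [pow_one, pow_zero, mul_div_assoc', mul_div_assoc', ← add_div, mul_one,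
    div_lt_iff₀ hp] at hK
  exact hK.le

/-- Bound for a product `U * V` when `V` contracts backwards the direction `f`, `U` contracts the
direction `e`, and the two directions are close. -/
lemma nrm_mul_le_of_contracted (U V : SL2) {e f : Plane} (he : ‖e‖ = 1) (hf : ‖f‖ = 1) {R : ℝ}
    (hU : nrm U ≤ R) (hV : nrm V ≤ R) :
    nrm (U * V) ≤ R * ‖actL U e‖ + R * ‖actL V⁻¹ f‖ + R ^ 2 * |wedge e f| := by
  have hR : 0 ≤ R := (nrm_nonneg U).trans hU
  refine nrm_le (by positivity) fun x => ?_
  rw [actL_mul]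
  have h1 := norm_actL_le_of_unit U hf (actL V x)
  have h2 := norm_actL_le_of_unit U he f
  rw [hf, one_mul] at h2
  have h3 : |wedge f (actL V x)| ≤ ‖actL V⁻¹ f‖ * ‖x‖ := by
    rw [← wedge_actL V⁻¹, actL_inv_actL]
    exact abs_wedge_le _ _
  have h4 : ‖actL V x‖ ≤ R * ‖x‖ :=
    (norm_actL_le _ _).trans (mul_le_mul_of_nonneg_right hV (norm_nonneg _))
  calc ‖actL U (actL V x)‖ ≤ ‖actL V x‖ * ‖actL U f‖ + |wedge f (actL V x)| * nrm U := h1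
    _ ≤ (R * ‖x‖) * (‖actL U e‖ + |wedge e f| * R) + (‖actL V⁻¹ f‖ * ‖x‖) * R := by
        have := nrm_nonneg U
        gcongr
        exact h2.trans (by gcongr)
    _ = _ := by ring

/-- The norm of `U * V` is comparable to `‖U‖ ‖V‖` when the direction most contracted by `U` is
transverse to the one most contracted by `V⁻¹`, which is the image under `V` of the direction that
`V` expands most. -/
lemma wedge_mul_nrm_le (U V : SL2) :
    |wedge (ctr U) (ctr V⁻¹)| * nrm U * nrm V ≤ nrm (U * V) := by
  have h1 : |wedge (ctr U) (ctr V⁻¹)| ≤ (nrm U)⁻¹ * ‖actL U (ctr V⁻¹)‖ := by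
    rw [← wedge_actL U, ← norm_actL_ctr U]
    exact abs_wedge_le _ _
  have h2 : ‖actL U (ctr V⁻¹)‖ ≤ nrm (U * V) * (nrm V)⁻¹ := by
    have := norm_actL_le (U * V) (actL V⁻¹ (ctr V⁻¹))
    rwa [actL_mul, actL_actL_inv, norm_actL_ctr, nrm_inv] at this
  have hU := nrm_pos U
  have hV := nrm_pos V
  calc |wedge (ctr U) (ctr V⁻¹)| * nrm U * nrm V
      ≤ ((nrm U)⁻¹ * (nrm (U * V) * (nrm V)⁻¹)) * nrm U * nrm V := by
        gcongr
        exact h1.trans (by gcongr)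
    _ = nrm (U * V) := by field_simp

lemma wordProd_append {ι : Type} (A : ι → SL2) (u v : List ι) :
    wordProd A (u ++ v) = wordProd A u * wordProd A v := by
  simp [wordProd]

/-- Almost multiplicativity when one factor is bounded; the inverse of a matrix in `SL₂(ℝ)` has
the same norm. -/
lemma mul_nrm_le_of_nrm_le {U V : SL2} {R : ℝ} (hR : 0 < R) (h : nrm U ≤ R ∨ nrm V ≤ R) :
    (R ^ 2)⁻¹ * nrm U * nrm V ≤ nrm (U * V) := by
  have hU := nrm_pos U
  have hV := nrm_pos V
  have hUV := nrm_pos (U * V)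
  rw [mul_assoc, inv_mul_le_iff₀ (by positivity)]
  rcases h with h | h
  · have h1 : nrm V ≤ nrm U * nrm (U * V) := by
      simpa [nrm_inv] using nrm_mul_le U⁻¹ (U * V)
    calc nrm U * nrm V ≤ nrm U * (nrm U * nrm (U * V)) := by gcongr
      _ ≤ R * (R * nrm (U * V)) := by gcongr
      _ = _ := by ring
  · have h1 : nrm U ≤ nrm (U * V) * nrm V := by
      simpa [nrm_inv] using nrm_mul_le (U * V) V⁻¹
    calc nrm U * nrm V ≤ (nrm (U * V) * nrm V) * nrm V := by gcongr
      _ ≤ (nrm (U * V) * R) * R := by gcongr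
      _ = _ := by ring

/-- almost multiplicativity of the norm along a uniformly hyperbolic family. -/
theorem statement11 {ι : Type} [Fintype ι] (A : ι → SL2) (hUH : UniformlyHyperbolic A) :
    ∃ ρ ∈ Set.Ioc (0:ℝ) 1, ∀ w w' : List ι, w ≠ [] → w' ≠ [] →
      ρ * opNorm (wordProd A w' : Mat2) * opNorm (wordProd A w : Mat2) ≤
        opNorm ((wordProd A w' * wordProd A w : SL2) : Mat2) := by
  obtain ⟨c₀, hc₀, r, hr, hgrow₀⟩ := hUH
  -- with `c ≤ 1` the growth bound also covers the empty word
  obtain ⟨c, hc, hc1, hgrow⟩ : ∃ c > (0:ℝ), c ≤ 1 ∧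
      ∀ w : List ι, c * r ^ w.length ≤ nrm (wordProd A w) := by
    refine ⟨min c₀ 1, lt_min hc₀ one_pos, min_le_right _ _, fun w => ?_⟩
    rcases eq_or_ne w [] with rfl | hw
    · simpa using Or.inr (one_le_nrm (wordProd A []))
    · refine le_trans ?_ (hgrow₀ w hw)
      have : 0 < r ^ w.length := pow_pos (one_pos.trans hr) _
      gcongr
      exact min_le_left _ _
  obtain ⟨M, hM, hAM⟩ : ∃ M > (1:ℝ), ∀ i, nrm (A i) ≤ M := by
    refine ⟨2 + ∑ i, nrm (A i), ?_, fun i => ?_⟩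
    · have := Finset.sum_nonneg fun i (_ : i ∈ Finset.univ) => nrm_nonneg (A i)
      linarith
    · have := Finset.single_le_sum (fun i _ => nrm_nonneg (A i)) (Finset.mem_univ i)
      linarith
  -- `L` is the rate at which guaranteed growth catches up: `M ^ K ≤ r ^ (L * K)`
  obtain ⟨L, hL'⟩ := pow_unbounded_of_one_lt M hr
  have hL := hL'.le
  set B := M ^ 2 / c ^ 2 with hB
  set D := (1 - r⁻¹)⁻¹ with hD
  -- `K` makes `c * r ^ K` exceed by `1` the sum of the two bounds of `contraction_at_last_time`
  obtain ⟨K, hK⟩ := exists_linear_le_pow hc hr (2 * (B * L)) (2 * (M + B * D) + 1)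
  set R := M ^ K with hR
  have hR1 : 1 ≤ R := one_le_pow₀ hM.le
  have hR0 : 0 < R := one_pos.trans_le hR1
  refine ⟨(R ^ 2)⁻¹, ⟨by positivity, inv_le_one_of_one_le₀ (one_le_pow₀ hR1)⟩, ?_⟩
  intro v u _ _
  change (R ^ 2)⁻¹ * nrm (wordProd A u) * nrm (wordProd A v) ≤ nrm (wordProd A u * wordProd A v)
  by_cases hsmall : nrm (wordProd A u) ≤ R ∨ nrm (wordProd A v) ≤ R
  · exact mul_nrm_le_of_nrm_le hR0 hsmall
  push Not at hsmall
  obtain ⟨hu, hv⟩ := hsmall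
  -- suffixes of `u`, by increasing length
  obtain ⟨m, hmN, hKm, hmR, hmC⟩ := contraction_at_last_time (K := K) (N := u.length) hM hc hc1 hr
    hL (fun n => wordProd A (u.drop (u.length - n))) (by simp [wordProd])
    (by
      intro n hn
      have h1 : u.length - (n + 1) < u.length := by omega
      have h2 : u.length - (n + 1) + 1 = u.length - n := by omega
      rw [List.drop_eq_getElem_cons h1, h2]
      simpa [wordProd] using hAM _)
    (by
      intro n hn
      have := hgrow (u.drop (u.length - n))
      rwa [List.length_drop, Nat.sub_sub_self hn] at this)
    (by simpa using hu)
  -- inverses of the products along prefixes of `v`, by increasing length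
  obtain ⟨m', hmN', hKm', hmV, hmC'⟩ := contraction_at_last_time (K := K) (N := v.length) hM hc
    hc1 hr hL (fun n => (wordProd A (v.take n))⁻¹) (by simp [wordProd])
    (by
      intro n hn
      rw [List.take_succ_eq_append_getElem hn, wordProd_append]
      simpa [wordProd, nrm_inv] using hAM _)
    (by
      intro n hn
      have := hgrow (v.take n)
      rwa [List.length_take, min_eq_left hn, ← nrm_inv] at this)
    (by simpa [nrm_inv] using hv)
  simp only [Nat.sub_self, List.drop_zero, List.take_length, nrm_inv] at hmC hmC' hmV
  have hup := nrm_mul_le_of_contracted (wordProd A (u.drop (u.length - m)))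
    (wordProd A (v.take m')) (norm_ctr (wordProd A u)) (norm_ctr (wordProd A v)⁻¹) hmR hmV
  -- the suffix of `u` followed by the prefix of `v` is a word, of length at least `2 * K`
  have hlow := hgrow (u.drop (u.length - m) ++ v.take m')
  rw [wordProd_append, List.length_append, List.length_drop, Nat.sub_sub_self hmN,
    List.length_take, min_eq_left hmN'] at hlow
  have hpow : c * r ^ K ≤ c * r ^ (m + m') :=
    mul_le_mul_of_nonneg_left (pow_le_pow_right₀ hr.le (by omega)) hc.le
  push_cast at hmC hmC'
  have hw : 1 ≤ R ^ 2 * |wedge (ctr (wordProd A u)) (ctr (wordProd A v)⁻¹)| := by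
    nlinarith
  refine le_trans ?_ (wedge_mul_nrm_le _ _)
  have := nrm_nonneg (wordProd A u)
  have := nrm_nonneg (wordProd A v)
  gcongr
  rwa [inv_le_iff_one_le_mul₀' (by positivity)]


end

end Paper
end

section
/- Let I be a nonempty finite index set, let 𝒜 = (A_i)_{i∈I} be a uniformly hyperbolic family in SL₂(ℝ), and let p = (p_i)_{i∈I} be a nondegenerate probability vector. Then for every (q,s) ∈ ℝ² the sequence ((1/n)·log Σ_{i∈Iⁿ} p_i^q·‖A_i‖^(2s))_{n≥1} converges, and the resulting function Ψ : ℝ² → ℝ given by Ψ(q,s) = lim_{n→∞} (1/n)·log Σ_{i∈Iⁿ} p_i^q·‖A_i‖^(2s) is real analytic on ℝ². -/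
/-!
The pressure is the logarithm of the leading eigenvalue of a transfer operator, and that eigenvalue
depends analytically on the parameters because it is isolated and simple. Everything takes place on
the set of finite words, so the projective action and its limit set are not needed.

*The cocycle.* Replace `‖A_w‖²` by the squared Frobenius norm `fro A_w`, which agrees with it up to
a factor `2`, and put `φ_i(w) = log fro(A_i A_w) - log fro(A_w)` (`phi`). The difference
`fro(BMD) fro(M) - fro(BM) fro(MD)` vanishes when `M` has rank one, hence is a multiple of
`det M = 1` and only `O(‖M‖²)` (`fro_defect`). So appending a letter on the right of `w` changes
`φ_i(w)` by `O(‖A_w‖⁻²)`, and uniform hyperbolicity makes `φ_i` Hölder: it varies by `O(θⁿ)` over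
the words with a common prefix of length `n` (`phi_holder`).

*The transfer operator.* Let `(L f)(x) = ∑ i, p_i^q exp(s φ_i(x)) f(i :: x)`. The partition sum
`S_n(u) = ∑_{|w| = n} p_w^q fro(A_w)^s u(w)` satisfies `S_{n+1}(u) = S_n(L u)`
(`partSum_succ`). If `L f = λ f` with `f` between positive constants, it follows that the sums in
the theorem lie between two multiples of `λⁿ`, and the limit exists and equals `log λ`
(`tendsto_psiAvg`).

*The eigenfunction.* In logarithmic coordinates `L` is a log-sum-exp map whose derivative is a
Markov operator with Hölder log-weights. Coupling the letters chosen at two words that share a long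
initial segment shows that such Markov operators strictly contract a modulus of continuity
`rho` (`markov_contract`). Iterating the normalised map therefore gives a positive eigenfunction
`h` (`exists_lse_fixed`).

*Analyticity.* On the Banach space `HolSpace` of functions with modulus `rho`, the operator `L` is an
analytic function of `(q, s)`, being built from exponentials of multiplication operators. The
implicit function theorem applies to `L f = (L f)([]) f` near `f = h` (`exists_eigen_branch`): after
conjugation by `h`, the derivative in `f` is `-λ (1 - Q)` with `Q` a centred Markov operator,
and `‖Q‖ < 1` by the same contraction estimate (`transfer_linearised_invertible`). Hence eigenvalue
and eigenfunction continue analytically to nearby parameters, and the eigenfunction remains positive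
(`exists_analytic_eigenvalue`).
-/

open MeasureTheory Filter Set Topology

namespace Paper

noncomputable section

/-! ### Frobenius norm and almost multiplicativity -/

/-- The squared Frobenius norm of a 2×2 real matrix. -/
def fro (M : Mat2) : ℝ := M 0 0 ^ 2 + M 0 1 ^ 2 + M 1 0 ^ 2 + M 1 1 ^ 2

lemma fro_nonneg (M : Mat2) : 0 ≤ fro M := by unfold fro; positivity

lemma fro_one : fro ((1 : SL2) : Mat2) = 2 := by
  simp [fro]; norm_num

lemma fro_mul_le (M N : Mat2) : fro (M * N) ≤ fro M * fro N := by
  simp only [fro, Matrix.mul_apply, Fin.sum_univ_two]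
  nlinarith [sq_nonneg (M 0 0 * N 1 0 - M 0 1 * N 0 0), sq_nonneg (M 0 0 * N 1 1 - M 0 1 * N 0 1),
    sq_nonneg (M 1 0 * N 1 0 - M 1 1 * N 0 0), sq_nonneg (M 1 0 * N 1 1 - M 1 1 * N 0 1)]

lemma fro_inv (A : SL2) : fro ((A⁻¹ : SL2) : Mat2) = fro (A : Mat2) := by
  rw [Matrix.SpecialLinearGroup.SL2_inv_expl]
  simp [fro]; ring

lemma fro_pos (A : SL2) : 0 < fro (A : Mat2) := by
  by_contra h
  have h0 : fro (A : Mat2) = 0 := le_antisymm (not_lt.1 h) (fro_nonneg _)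
  have := fro_mul_le (A : Mat2) ((A⁻¹ : SL2) : Mat2)
  rw [← Matrix.SpecialLinearGroup.coe_mul, mul_inv_cancel, fro_one, h0, zero_mul] at this
  norm_num at this

lemma fro_le_mul_left (B M : SL2) :
    fro (M : Mat2) ≤ fro (B : Mat2) * fro ((B * M : SL2) : Mat2) := by
  have := fro_mul_le ((B⁻¹ : SL2) : Mat2) ((B * M : SL2) : Mat2)
  rwa [← Matrix.SpecialLinearGroup.coe_mul, inv_mul_cancel_left, fro_inv] at this

lemma fro_le_mul_right (M D : SL2) :
    fro (M : Mat2) ≤ fro (D : Mat2) * fro ((M * D : SL2) : Mat2) := by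
  have := fro_mul_le ((M * D : SL2) : Mat2) ((D⁻¹ : SL2) : Mat2)
  rw [← Matrix.SpecialLinearGroup.coe_mul, mul_inv_cancel_right, fro_inv] at this
  linarith

lemma opNorm_sq_le_fro (M : Mat2) : opNorm M ^ 2 ≤ fro M := by
  have h : opNorm M ≤ √(fro M) := by
    refine ContinuousLinearMap.opNorm_le_bound _ (Real.sqrt_nonneg _) fun x => ?_
    rw [EuclideanSpace.norm_eq, EuclideanSpace.norm_eq, ← Real.sqrt_mul (fro_nonneg _)]
    refine Real.sqrt_le_sqrt ?_
    simp [Matrix.toEuclideanLin, Fin.sum_univ_two, Matrix.mulVec, dotProduct, fro]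
    nlinarith [sq_nonneg (M 0 0 * x 1 - M 0 1 * x 0), sq_nonneg (M 1 0 * x 1 - M 1 1 * x 0)]
  calc opNorm M ^ 2 ≤ √(fro M) ^ 2 := by
        have : 0 ≤ opNorm M := norm_nonneg _
        gcongr
    _ = fro M := Real.sq_sqrt (fro_nonneg _)

lemma fro_le_two_opNorm_sq (M : Mat2) : fro M ≤ 2 * opNorm M ^ 2 := by
  have key : ∀ j : Fin 2, M 0 j ^ 2 + M 1 j ^ 2 ≤ opNorm M ^ 2 := by
    intro j
    have h := (Matrix.toEuclideanLin M).toContinuousLinearMap.le_opNorm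
      (EuclideanSpace.single j (1 : ℝ))
    rw [PiLp.norm_single, norm_one, mul_one, EuclideanSpace.norm_eq] at h
    have h2 := Real.sqrt_le_iff.1 h
    have h3 := h2.2
    simpa [opNorm, Matrix.toEuclideanLin, Fin.sum_univ_two] using h3
  have h0 := key 0
  have h1 := key 1
  unfold fro
  linarith

/-- Each of the four quadratic forms in `a, b, c, d` is bounded by their sum of squares. -/
lemma defect_bound (α β γ δ a b c d : ℝ) :
    |α * γ * (2 * (a * d + b * c)) + α * δ * (2 * (b * d - a * c))
        + β * γ * (2 * (c * d - a * b)) + β * δ * (a ^ 2 - b ^ 2 + d ^ 2 - c ^ 2)|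
      ≤ (|α * γ| + |α * δ| + |β * γ| + |β * δ|) * (a ^ 2 + b ^ 2 + c ^ 2 + d ^ 2) := by
  generalize hN : a ^ 2 + b ^ 2 + c ^ 2 + d ^ 2 = N
  have e1 : |2 * (a * d + b * c)| ≤ N := by
    rw [abs_le]; constructor <;> nlinarith [hN, sq_nonneg (a - d), sq_nonneg (a + d), sq_nonneg (b - c), sq_nonneg (b + c)]
  have e2 : |2 * (b * d - a * c)| ≤ N := by
    rw [abs_le]; constructor <;> nlinarith [hN, sq_nonneg (a - c), sq_nonneg (a + c), sq_nonneg (b - d), sq_nonneg (b + d)]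
  have e3 : |2 * (c * d - a * b)| ≤ N := by
    rw [abs_le]; constructor <;> nlinarith [hN, sq_nonneg (a - b), sq_nonneg (a + b), sq_nonneg (c - d), sq_nonneg (c + d)]
  have e4 : |a ^ 2 - b ^ 2 + d ^ 2 - c ^ 2| ≤ N := by
    rw [abs_le]; constructor <;> nlinarith [hN, sq_nonneg a, sq_nonneg b, sq_nonneg c, sq_nonneg d]
  have aux : ∀ x y : ℝ, |y| ≤ N → |x * y| ≤ |x| * N := fun x y h => by
    rw [abs_mul]; gcongr
  have f1 := aux (α * γ) _ e1
  have f2 := aux (α * δ) _ e2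
  have f3 := aux (β * γ) _ e3
  have f4 := aux (β * δ) _ e4
  have t1 := abs_add_le (α * γ * (2 * (a * d + b * c)) + α * δ * (2 * (b * d - a * c))
        + β * γ * (2 * (c * d - a * b))) (β * δ * (a ^ 2 - b ^ 2 + d ^ 2 - c ^ 2))
  have t2 := abs_add_le (α * γ * (2 * (a * d + b * c)) + α * δ * (2 * (b * d - a * c)))
        (β * γ * (2 * (c * d - a * b)))
  have t3 := abs_add_le (α * γ * (2 * (a * d + b * c))) (α * δ * (2 * (b * d - a * c)))
  linarith

/-- The defect of multiplicativity of the squared Frobenius norm. The difference below vanishes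
when `M` has rank one, so it is a multiple of `det M`; the cofactor has degree two in `M`. -/
lemma fro_defect (B D : Mat2) : ∃ K : ℝ, 0 ≤ K ∧ ∀ M : SL2,
    |fro (B * M * D) * fro (M : Mat2) - fro (B * M) * fro ((M : Mat2) * D)|
      ≤ K * fro (M : Mat2) := by
  -- coordinates of the traceless parts of `BᵀB` and `DDᵀ`
  let α := (B 0 0 ^ 2 + B 1 0 ^ 2 - B 0 1 ^ 2 - B 1 1 ^ 2) / 2
  let β := B 0 0 * B 0 1 + B 1 0 * B 1 1
  let γ := (D 0 0 ^ 2 + D 0 1 ^ 2 - D 1 0 ^ 2 - D 1 1 ^ 2) / 2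
  let δ := D 0 0 * D 1 0 + D 0 1 * D 1 1
  refine ⟨2 * (|α * γ| + |α * δ| + |β * γ| + |β * δ|), by positivity, fun M => ?_⟩
  have hdet := M.det_coe
  rw [Matrix.det_fin_two] at hdet
  have hb := defect_bound α β γ δ ((M : Mat2) 0 0) ((M : Mat2) 0 1) ((M : Mat2) 1 0) ((M : Mat2) 1 1)
  generalize (M : Mat2) = M' at hdet hb ⊢
  have hid : fro (B * M' * D) * fro M' - fro (B * M') * fro (M' * D) =
      2 * (M' 0 0 * M' 1 1 - M' 0 1 * M' 1 0) *
        (α * γ * (2 * (M' 0 0 * M' 1 1 + M' 0 1 * M' 1 0))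
          + α * δ * (2 * (M' 0 1 * M' 1 1 - M' 0 0 * M' 1 0))
          + β * γ * (2 * (M' 1 0 * M' 1 1 - M' 0 0 * M' 0 1))
          + β * δ * (M' 0 0 ^ 2 - M' 0 1 ^ 2 + M' 1 1 ^ 2 - M' 1 0 ^ 2)) := by
    simp only [fro, Matrix.mul_apply, Fin.sum_univ_two, α, β, γ, δ]
    ring
  rw [hid, hdet, mul_one, abs_mul, abs_two, mul_assoc (2 : ℝ) (_ + _)]
  exact mul_le_mul_of_nonneg_left hb zero_le_two

lemma abs_log_sub_log_le {x y m : ℝ} (hm : 0 < m) (hx : m ≤ x) (hy : m ≤ y) :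
    |Real.log x - Real.log y| ≤ |x - y| / m := by
  have hx0 := hm.trans_le hx
  have hy0 := hm.trans_le hy
  have key : ∀ u v : ℝ, m ≤ u → m ≤ v → Real.log u - Real.log v ≤ |u - v| / m := by
    intro u v hu hv
    have hu0 := hm.trans_le hu
    have hv0 := hm.trans_le hv
    rw [← Real.log_div hu0.ne' hv0.ne']
    calc Real.log (u / v) ≤ u / v - 1 := Real.log_le_sub_one_of_pos (by positivity)
      _ = (u - v) / v := by field_simp
      _ ≤ |u - v| / v := by gcongr; exact le_abs_self _
      _ ≤ |u - v| / m := by gcongr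
  rw [abs_le]
  constructor
  · have := key y x hy hx
    rw [abs_sub_comm] at this
    linarith
  · exact key x y hx hy

/-- The increment of the norm cocycle: `log (‖A_i A_w‖² / ‖A_w‖²)` in Frobenius norm. -/
def phi {ι : Type*} (A : ι → SL2) (i : ι) (w : List ι) : ℝ :=
  Real.log (fro (wordProd A (i :: w) : Mat2)) - Real.log (fro (wordProd A w : Mat2))

/-- Appending one letter on the right changes the cocycle by `O(‖A_w‖⁻²)`. -/
lemma phi_step {ι : Type*} [Finite ι] (A : ι → SL2) :
    ∃ K : ℝ, 0 ≤ K ∧ ∀ (i j : ι) (w : List ι),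
      |phi A i (w ++ [j]) - phi A i w| ≤ K / fro (wordProd A w : Mat2) := by
  choose K hK0 hK using fun ij : ι × ι => fro_defect (A ij.1 : Mat2) (A ij.2 : Mat2)
  obtain ⟨C, hC⟩ := Finite.exists_le
    (fun ij : ι × ι => K ij * (fro (A ij.1 : Mat2) * fro (A ij.2 : Mat2)))
  refine ⟨max C 0, le_max_right _ _, fun i j w => ?_⟩
  set M := wordProd A w with hM
  have h1 : wordProd A (i :: w) = A i * M := by simp [wordProd, hM]
  have h2 : wordProd A (w ++ [j]) = M * A j := by simp [wordProd, hM]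
  have h3 : wordProd A (i :: (w ++ [j])) = A i * M * A j := by simp [wordProd, hM, mul_assoc]
  have hMp := fro_pos M
  have hip := fro_pos (A i)
  have hjp := fro_pos (A j)
  set N := fro (M : Mat2) with hN
  set x := fro ((A i * M * A j : SL2) : Mat2) * N with hx
  set y := fro ((A i * M : SL2) : Mat2) * fro ((M * A j : SL2) : Mat2) with hy
  have hlog : phi A i (w ++ [j]) - phi A i w = Real.log x - Real.log y := by
    rw [hx, hy, Real.log_mul (fro_pos _).ne' hMp.ne', Real.log_mul (fro_pos _).ne' (fro_pos _).ne']
    simp only [phi, h1, h2, h3, ← hM]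
    ring
  set m := N ^ 2 / (fro (A i : Mat2) * fro (A j : Mat2)) with hm
  have l1 := fro_le_mul_left (A i) M
  have l2 := fro_le_mul_right M (A j)
  have l3 := fro_le_mul_right (A i * M) (A j)
  have l4 := fro_pos (A i * M)
  have l5 := fro_pos (M * A j)
  have hmx : m ≤ x := by
    rw [hm, div_le_iff₀ (by positivity), hx]
    calc N ^ 2 = N * N := sq N
      _ ≤ (fro (A i : Mat2) * (fro (A j : Mat2) * fro ((A i * M * A j : SL2) : Mat2))) * N := by
        gcongr; exact l1.trans (by gcongr)
      _ = _ := by ring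
  have hmy : m ≤ y := by
    rw [hm, div_le_iff₀ (by positivity), hy]
    calc N ^ 2 = N * N := sq N
      _ ≤ (fro (A i : Mat2) * fro ((A i * M : SL2) : Mat2)) *
          (fro (A j : Mat2) * fro ((M * A j : SL2) : Mat2)) := by gcongr
      _ = _ := by ring
  have hd : |x - y| ≤ K (i, j) * N := by
    have := hK (i, j) M
    simpa [hx, hy] using this
  rw [hlog]
  calc |Real.log x - Real.log y| ≤ |x - y| / m := abs_log_sub_log_le (by positivity) hmx hmy
    _ ≤ (K (i, j) * N) / m := by gcongr
    _ = (K (i, j) * (fro (A i : Mat2) * fro (A j : Mat2))) / N := by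
        rw [hm]; field_simp
    _ ≤ max C 0 / N := by gcongr; exact (hC (i, j)).trans (le_max_left _ _)

/-- For a uniformly hyperbolic family the norm cocycle is Hölder continuous for the word metric:
it depends exponentially little on the letters beyond a common prefix. -/
lemma phi_holder {ι : Type*} [Finite ι] (A : ι → SL2) (hUH : UniformlyHyperbolic A) :
    ∃ θ ∈ Set.Ioo (0 : ℝ) 1, ∃ C : ℝ, 0 ≤ C ∧ ∀ (i : ι) (w a c : List ι),
      |phi A i (w ++ a) - phi A i (w ++ c)| ≤ C * θ ^ w.length := by
  obtain ⟨K, hK0, hK⟩ := phi_step A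
  obtain ⟨c, hc, r, hr, hw⟩ := hUH
  set θ := (r ^ 2)⁻¹ with hθ
  have hr0 : 0 < r := by linarith
  have hθ0 : 0 < θ := by positivity
  have hθ1 : θ < 1 := inv_lt_one_of_one_lt₀ (one_lt_pow₀ hr two_ne_zero)
  set m := min (c ^ 2) 1 with hm
  have hm0 : 0 < m := lt_min (by positivity) one_pos
  have hlow : ∀ w : List ι, m * (θ ^ w.length)⁻¹ ≤ fro (wordProd A w : Mat2) := by
    intro w
    rcases eq_or_ne w [] with rfl | hne
    · have : fro (wordProd A ([] : List ι) : Mat2) = 2 := by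
        rw [← fro_one]; simp [wordProd]
      rw [this]
      simp only [List.length_nil, pow_zero, inv_one, mul_one]
      exact (min_le_right _ _).trans one_le_two
    · calc m * (θ ^ w.length)⁻¹ ≤ c ^ 2 * (θ ^ w.length)⁻¹ := by
            gcongr; exact min_le_left _ _
        _ = (c * r ^ w.length) ^ 2 := by
            rw [hθ, inv_pow, inv_inv, mul_pow, ← pow_mul, ← pow_mul, mul_comm 2]
        _ ≤ opNorm (wordProd A w : Mat2) ^ 2 := by
            have := hw w hne
            gcongr
        _ ≤ _ := opNorm_sq_le_fro _
  have hstep : ∀ (i j : ι) (w : List ι),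
      |phi A i (w ++ [j]) - phi A i w| ≤ (K / m) * θ ^ w.length := by
    intro i j w
    refine (hK i j w).trans ?_
    calc K / fro (wordProd A w : Mat2) ≤ K / (m * (θ ^ w.length)⁻¹) := by
          gcongr; exact hlow w
      _ = _ := by field_simp
  have htel : ∀ (i : ι) (a w : List ι),
      |phi A i (w ++ a) - phi A i w| ≤ (K / m / (1 - θ)) * θ ^ w.length := by
    intro i a
    have h1θ : 0 < 1 - θ := by linarith
    induction a with
    | nil => intro w; simp; positivity
    | cons j a ih =>
      intro w
      have e1 := ih (w ++ [j])
      have e2 := hstep i j w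
      rw [List.append_assoc, List.singleton_append, List.length_append, List.length_singleton,
        pow_succ] at e1
      calc |phi A i (w ++ j :: a) - phi A i w|
          ≤ |phi A i (w ++ j :: a) - phi A i (w ++ [j])| + |phi A i (w ++ [j]) - phi A i w| :=
            abs_sub_le _ _ _
        _ ≤ (K / m / (1 - θ)) * (θ ^ w.length * θ) + (K / m) * θ ^ w.length := by gcongr
        _ = _ := by field_simp; ring
  refine ⟨θ, ⟨hθ0, hθ1⟩, 2 * (K / m / (1 - θ)), ?_, fun i w a c => ?_⟩
  · have h1θ : 0 < 1 - θ := by linarith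
    positivity
  · have e1 := htel i a w
    have e2 := htel i c w
    rw [abs_sub_comm] at e2
    linarith [abs_sub_le (phi A i (w ++ a)) (phi A i w) (phi A i (w ++ c))]

/-! ### Softmax weights and the coupling estimate -/

section Softmax

variable {ι : Type*} [Fintype ι]

/-- The probability vector proportional to `exp (a i)`. -/
def softmax (a : ι → ℝ) (i : ι) : ℝ := Real.exp (a i) / ∑ j, Real.exp (a j)

lemma softmax_nonneg (a : ι → ℝ) (i : ι) : 0 ≤ softmax a i := by unfold softmax; positivity

lemma sum_exp_pos [Nonempty ι] (a : ι → ℝ) : 0 < ∑ j, Real.exp (a j) :=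
  Finset.sum_pos (fun _ _ => Real.exp_pos _) Finset.univ_nonempty

lemma sum_softmax [Nonempty ι] (a : ι → ℝ) : ∑ i, softmax a i = 1 := by
  unfold softmax
  rw [← Finset.sum_div, div_self (sum_exp_pos a).ne']

lemma sum_exp_le {a b : ι → ℝ} {ε : ℝ} (h : ∀ i, |a i - b i| ≤ ε) :
    ∑ i, Real.exp (a i) ≤ Real.exp ε * ∑ i, Real.exp (b i) := by
  rw [Finset.mul_sum]
  refine Finset.sum_le_sum fun i _ => ?_
  rw [← Real.exp_add]
  exact Real.exp_le_exp.2 (by linarith [(abs_le.1 (h i)).2])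

lemma lse_lip [Nonempty ι] {a b : ι → ℝ} {ε : ℝ} (h : ∀ i, |a i - b i| ≤ ε) :
    |Real.log (∑ i, Real.exp (a i)) - Real.log (∑ i, Real.exp (b i))| ≤ ε := by
  have key : ∀ {a b : ι → ℝ}, (∀ i, |a i - b i| ≤ ε) →
      Real.log (∑ i, Real.exp (a i)) ≤ ε + Real.log (∑ i, Real.exp (b i)) := by
    intro a b h
    have := Real.log_le_log (sum_exp_pos a) (sum_exp_le h)
    rwa [Real.log_mul (Real.exp_pos _).ne' (sum_exp_pos b).ne', Real.log_exp] at this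
  have h1 := key h
  have h2 := key (fun i => by rw [abs_sub_comm]; exact h i : ∀ i, |b i - a i| ≤ ε)
  rw [abs_le]; constructor <;> linarith

lemma softmax_ge [Nonempty ι] {a b : ι → ℝ} {ε : ℝ} (h : ∀ i, |a i - b i| ≤ ε) (i : ι) :
    Real.exp (-(2 * ε)) * softmax a i ≤ softmax b i := by
  unfold softmax
  have ha := sum_exp_pos a
  have hb := sum_exp_pos b
  have h1 : ∑ i, Real.exp (b i) ≤ Real.exp ε * ∑ i, Real.exp (a i) :=
    sum_exp_le fun i => by rw [abs_sub_comm]; exact h i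
  have h2 : Real.exp (a i) ≤ Real.exp ε * Real.exp (b i) := by
    rw [← Real.exp_add]
    exact Real.exp_le_exp.2 (by linarith [(abs_le.1 (h i)).2])
  rw [← mul_div_assoc, div_le_div_iff₀ ha hb]
  calc Real.exp (-(2 * ε)) * Real.exp (a i) * ∑ i, Real.exp (b i)
      ≤ Real.exp (-(2 * ε)) * (Real.exp ε * Real.exp (b i)) *
          (Real.exp ε * ∑ i, Real.exp (a i)) := by gcongr
    _ = Real.exp (-(2 * ε)) * Real.exp ε * Real.exp ε * (Real.exp (b i) * ∑ i, Real.exp (a i)) := by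
        ring
    _ = _ := by
        rw [← Real.exp_add, ← Real.exp_add, show -(2 * ε) + ε + ε = 0 by ring, Real.exp_zero,
          one_mul]

/-- Coupling two softmax laws: with probability at least `exp (-2ε)` the same index is drawn. -/
lemma softmax_coupling [Nonempty ι] {a b g g' : ι → ℝ} {ε s S : ℝ} (h : ∀ i, |a i - b i| ≤ ε)
    (hs : ∀ i, |g i - g' i| ≤ s) (hS : ∀ i j, |g i - g' j| ≤ S) :
    |∑ i, softmax a i * g i - ∑ i, softmax b i * g' i| ≤
      Real.exp (-(2 * ε)) * s + (1 - Real.exp (-(2 * ε))) * S := by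
  set e := Real.exp (-(2 * ε)) with he
  have he0 : 0 ≤ e := (Real.exp_pos _).le
  have hr : ∀ j, 0 ≤ softmax b j - e * softmax a j := fun j => sub_nonneg.2 (softmax_ge h j)
  have hrs : ∑ j, (softmax b j - e * softmax a j) = 1 - e := by
    rw [Finset.sum_sub_distrib, ← Finset.mul_sum, sum_softmax, sum_softmax, mul_one]
  have hid : ∑ i, softmax a i * g i - ∑ i, softmax b i * g' i =
      e * ∑ i, softmax a i * (g i - g' i) +
        ∑ i, ∑ j, softmax a i * ((softmax b j - e * softmax a j) * (g i - g' j)) := by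
    have h1 : ∑ i, ∑ j, softmax a i * ((softmax b j - e * softmax a j) * (g i - g' j)) =
        (1 - e) * ∑ i, softmax a i * g i - ∑ j, (softmax b j - e * softmax a j) * g' j := by
      have : ∀ i, ∑ j, softmax a i * ((softmax b j - e * softmax a j) * (g i - g' j)) =
          (1 - e) * (softmax a i * g i) -
            softmax a i * ∑ j, (softmax b j - e * softmax a j) * g' j := by
        intro i
        rw [← hrs, Finset.sum_mul, Finset.mul_sum, ← Finset.sum_sub_distrib]
        exact Finset.sum_congr rfl fun j _ => by ring
      simp_rw [this]
      rw [Finset.sum_sub_distrib, ← Finset.mul_sum, ← Finset.sum_mul, sum_softmax, one_mul]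
    have h2 : ∑ j, (softmax b j - e * softmax a j) * g' j =
        ∑ j, softmax b j * g' j - e * ∑ j, softmax a j * g' j := by
      rw [Finset.mul_sum, ← Finset.sum_sub_distrib]
      exact Finset.sum_congr rfl fun j _ => by ring
    have h3 : ∑ i, softmax a i * (g i - g' i) =
        ∑ i, softmax a i * g i - ∑ i, softmax a i * g' i := by
      rw [← Finset.sum_sub_distrib]
      exact Finset.sum_congr rfl fun j _ => by ring
    rw [h1, h2, h3]; ring
  rw [hid]
  refine (abs_add_le _ _).trans (add_le_add ?_ ?_)
  · rw [abs_mul, abs_of_nonneg he0]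
    refine mul_le_mul_of_nonneg_left ?_ he0
    calc |∑ i, softmax a i * (g i - g' i)| ≤ ∑ i, softmax a i * s := by
          refine (Finset.abs_sum_le_sum_abs _ _).trans (Finset.sum_le_sum fun i _ => ?_)
          rw [abs_mul, abs_of_nonneg (softmax_nonneg a i)]
          exact mul_le_mul_of_nonneg_left (hs i) (softmax_nonneg a i)
      _ = s := by rw [← Finset.sum_mul, sum_softmax, one_mul]
  · calc |∑ i, ∑ j, softmax a i * ((softmax b j - e * softmax a j) * (g i - g' j))|
        ≤ ∑ i, ∑ j, softmax a i * ((softmax b j - e * softmax a j) * S) := by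
          refine (Finset.abs_sum_le_sum_abs _ _).trans (Finset.sum_le_sum fun i _ =>
            (Finset.abs_sum_le_sum_abs _ _).trans (Finset.sum_le_sum fun j _ => ?_))
          rw [abs_mul, abs_mul, abs_of_nonneg (softmax_nonneg a i), abs_of_nonneg (hr j)]
          exact mul_le_mul_of_nonneg_left (mul_le_mul_of_nonneg_left (hS i j) (hr j))
            (softmax_nonneg a i)
      _ = (1 - e) * S := by
          simp_rw [← Finset.mul_sum, ← Finset.sum_mul, hrs]
          rw [sum_softmax, one_mul]

end Softmax

/-! ### Hölder moduli on words and the contraction of Markov operators -/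

/-- `u` varies by at most `C * ρ n` over the words with a given prefix of length `n`. -/
def Hol {ι : Type*} (ρ : ℕ → ℝ) (C : ℝ) (u : List ι → ℝ) : Prop :=
  ∀ w a c : List ι, |u (w ++ a) - u (w ++ c)| ≤ C * ρ w.length

/-- The modulus adapted to weights of Hölder constant `B`: `1 - ∏_{k ≥ n} exp (-2 B θ ^ k)`, a
bound for the chance that a coupled pair of words sharing a prefix of length `n` ever picks different letters. -/
def rho (B θ : ℝ) (n : ℕ) : ℝ := 1 - Real.exp (-(2 * B / (1 - θ) * θ ^ n))

/-- The contraction factor for the modulus `rho B θ`. -/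
def kap (B θ : ℝ) : ℝ := 1 - (1 - θ) * Real.exp (-(2 * B / (1 - θ)))

section Rho

variable {B θ : ℝ}

lemma rho_pos (hB : 0 < B) (hθ0 : 0 < θ) (hθ1 : θ < 1) (n : ℕ) : 0 < rho B θ n := by
  have : 0 < 1 - θ := by linarith
  unfold rho
  rw [sub_pos, Real.exp_lt_one_iff, neg_lt_zero]
  positivity

lemma rho_le_one (n : ℕ) : rho B θ n ≤ 1 := by
  unfold rho; linarith [Real.exp_pos (-(2 * B / (1 - θ) * θ ^ n))]

lemma rho_anti (hB : 0 < B) (hθ0 : 0 < θ) (hθ1 : θ < 1) (n : ℕ) : rho B θ (n + 1) ≤ rho B θ n := by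
  have : 0 < 1 - θ := by linarith
  unfold rho
  refine sub_le_sub_left (Real.exp_le_exp.2 (neg_le_neg ?_)) _
  refine mul_le_mul_of_nonneg_left ?_ (by positivity)
  exact pow_le_pow_of_le_one hθ0.le hθ1.le n.le_succ

lemma pow_le_rho (hθ0 : 0 < θ) (hθ1 : θ < 1) (n : ℕ) : rho B θ 0 * θ ^ n ≤ rho B θ n := by
  unfold rho
  set y := 2 * B / (1 - θ)
  have ht : θ ^ n ≤ 1 := pow_le_one₀ hθ0.le hθ1.le
  have := convexOn_exp.2 (mem_univ (-y)) (mem_univ 0) (pow_nonneg hθ0.le n)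
    (sub_nonneg.2 ht) (by ring)
  simp only [smul_eq_mul, mul_zero, add_zero, Real.exp_zero, mul_one] at this
  rw [pow_zero, mul_one, show -(y * θ ^ n) = θ ^ n * -y by ring]
  linarith

lemma kap_nonneg (hB : 0 < B) (hθ0 : 0 < θ) (hθ1 : θ < 1) : 0 ≤ kap B θ := by
  have h1 : 0 < 1 - θ := by linarith
  have : Real.exp (-(2 * B / (1 - θ))) ≤ 1 := by
    rw [Real.exp_le_one_iff, neg_nonpos]; positivity
  unfold kap
  nlinarith [Real.exp_pos (-(2 * B / (1 - θ)))]

lemma kap_lt_one (hθ1 : θ < 1) : kap B θ < 1 := by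
  have h1 : 0 < 1 - θ := by linarith
  unfold kap
  have : 0 < (1 - θ) * Real.exp (-(2 * B / (1 - θ))) := by positivity
  linarith

/-- One step of the coupling: with probability at least `exp (-2 B θ ^ n)` the common prefix grows
by one letter, and otherwise it is lost. -/
lemma rho_step (hB : 0 < B) (hθ0 : 0 < θ) (hθ1 : θ < 1) (n : ℕ) :
    Real.exp (-(2 * (B * θ ^ n))) * rho B θ (n + 1) +
      (1 - Real.exp (-(2 * (B * θ ^ n)))) * rho B θ 0 ≤ kap B θ * rho B θ n := by
  have h1 : 0 < 1 - θ := by linarith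
  set y := 2 * B / (1 - θ) * θ ^ n with hy
  have he : -(2 * (B * θ ^ n)) = (1 - θ) * -y := by rw [hy]; field_simp
  have hE : Real.exp (-(2 * (B * θ ^ n))) * Real.exp (-(2 * B / (1 - θ) * θ ^ (n + 1))) =
      Real.exp (-y) := by
    rw [← Real.exp_add, he, pow_succ, ← mul_assoc, ← hy]; congr 1; ring
  have hconv := convexOn_exp.2 (mem_univ (-y)) (mem_univ 0) h1.le hθ0.le (by ring)
  simp only [smul_eq_mul, mul_zero, add_zero, Real.exp_zero, mul_one] at hconv
  rw [← he] at hconv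
  unfold rho kap
  rw [pow_zero, mul_one, ← hy, mul_sub, hE, mul_one]
  have := Real.exp_pos (-(2 * B / (1 - θ)))
  nlinarith

variable {ι : Type*}

lemma Hol.rho_of_pow (hB : 0 < B) (hθ0 : 0 < θ) (hθ1 : θ < 1) {R : ℝ} {u : List ι → ℝ}
    (hR : 0 ≤ R) (h : Hol (θ ^ ·) R u) :
    Hol (rho B θ) (R / rho B θ 0) u := fun w a c => by
  have h0 := rho_pos hB hθ0 hθ1 0
  calc |u (w ++ a) - u (w ++ c)| ≤ R * θ ^ w.length := h w a c
    _ = R / rho B θ 0 * (rho B θ 0 * θ ^ w.length) := by field_simp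
    _ ≤ _ := by gcongr; exact pow_le_rho hθ0 hθ1 _

/-- A Markov operator with Hölder log-weights contracts the modulus `rho`. -/
lemma markov_contract [Fintype ι] [Nonempty ι] (hB : 0 < B) (hθ0 : 0 < θ) (hθ1 : θ < 1)
    {ψ : ι → List ι → ℝ}
    (hψ : ∀ i, Hol (θ ^ ·) B (ψ i)) {C : ℝ} (hC : 0 ≤ C) {g : List ι → ℝ}
    (hg : Hol (rho B θ) C g) :
    Hol (rho B θ) (kap B θ * C) (fun x => ∑ i, softmax (ψ · x) i * g (i :: x)) := by
  intro w a c
  have := softmax_coupling (a := (ψ · (w ++ a))) (b := (ψ · (w ++ c)))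
    (g := fun i => g (i :: (w ++ a))) (g' := fun i => g (i :: (w ++ c)))
    (s := C * rho B θ (w.length + 1)) (S := C * rho B θ 0)
    (fun i => hψ i w a c) (fun i => hg (i :: w) a c)
    (fun i j => hg [] (i :: (w ++ a)) (j :: (w ++ c)))
  refine this.trans ?_
  have hs := mul_le_mul_of_nonneg_left (rho_step hB hθ0 hθ1 w.length) hC
  linarith

end Rho

/-! ### The fixed point of the logarithmic transfer operator -/

/-- The transfer operator in logarithmic coordinates. -/
def lse {ι : Type*} [Fintype ι] (ψ : ι → List ι → ℝ) (v : List ι → ℝ) (x : List ι) : ℝ :=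
  Real.log (∑ i, Real.exp (ψ i x + v (i :: x)))

section Fixed

variable {ι : Type*} {θ R B₀ : ℝ} {ψ : ι → List ι → ℝ}

lemma Hol.weights (hψ : ∀ i, Hol (θ ^ ·) B₀ (ψ i)) (hθ0 : 0 < θ) (hR : B₀ + θ * R ≤ R)
    {v : List ι → ℝ} (hv : Hol (θ ^ ·) R v) (i : ι) :
    Hol (θ ^ ·) R (fun x => ψ i x + v (i :: x)) := fun w a c => by
  have h1 := hψ i w a c
  have h2 := hv (i :: w) a c
  simp only [List.length_cons, pow_succ] at h2
  have h3 := abs_add_le (ψ i (w ++ a) - ψ i (w ++ c)) (v (i :: w ++ a) - v (i :: w ++ c))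
  have h4 : (B₀ + θ * R) * θ ^ w.length ≤ R * θ ^ w.length := by gcongr
  calc |ψ i (w ++ a) + v (i :: (w ++ a)) - (ψ i (w ++ c) + v (i :: (w ++ c)))|
      = |(ψ i (w ++ a) - ψ i (w ++ c)) + (v (i :: w ++ a) - v (i :: w ++ c))| := by
        congr 1; simp only [List.cons_append]; ring
    _ ≤ _ := by linarith

variable [Fintype ι] [Nonempty ι]

lemma Hol.lse (hψ : ∀ i, Hol (θ ^ ·) B₀ (ψ i)) (hθ0 : 0 < θ) (hR : B₀ + θ * R ≤ R)
    {v : List ι → ℝ} (hv : Hol (θ ^ ·) R v) : Hol (θ ^ ·) R (lse ψ v) :=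
  fun w a c => lse_lip fun i => Hol.weights hψ hθ0 hR hv i w a c

lemma hasDerivAt_lse (a g : ι → ℝ) (t : ℝ) :
    HasDerivAt (fun t => Real.log (∑ i, Real.exp (a i + t * g i)))
      (∑ i, softmax (fun i => a i + t * g i) i * g i) t := by
  have h : HasDerivAt (fun t => ∑ i, Real.exp (a i + t * g i))
      (∑ i, Real.exp (a i + t * g i) * g i) t := by
    refine HasDerivAt.fun_sum fun i _ => ?_
    have := ((hasDerivAt_id t).mul_const (g i)).const_add (a i)
    simpa using this.exp
  have := h.log (sum_exp_pos _).ne'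
  convert this using 1
  rw [Finset.sum_div]
  exact Finset.sum_congr rfl fun i _ => by simp only [softmax]; ring

/-- The derivative of `lse ψ` is a Markov operator with Hölder weights, so `lse ψ` contracts. -/
lemma lse_contract (hθ0 : 0 < θ) (hθ1 : θ < 1) (hR0 : 0 < R) (hψ : ∀ i, Hol (θ ^ ·) B₀ (ψ i))
    (hR : B₀ + θ * R ≤ R) {v₁ v₂ : List ι → ℝ} (h₁ : Hol (θ ^ ·) R v₁) (h₂ : Hol (θ ^ ·) R v₂)
    {C : ℝ} (hC : 0 ≤ C) (hg : Hol (rho R θ) C (fun x => v₁ x - v₂ x)) :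
    Hol (rho R θ) (kap R θ * C) (fun x => lse ψ v₁ x - lse ψ v₂ x) := by
  intro w a c
  set g : List ι → ℝ := fun x => v₁ x - v₂ x with hgdef
  let F : List ι → ℝ → ℝ := fun x t =>
    Real.log (∑ i, Real.exp (ψ i x + v₂ (i :: x) + t * g (i :: x)))
  let F' : List ι → ℝ → ℝ := fun x t =>
    ∑ i, softmax (fun i => ψ i x + v₂ (i :: x) + t * g (i :: x)) i * g (i :: x)
  have hF : ∀ x t, HasDerivAt (F x) (F' x t) t := fun x t => hasDerivAt_lse _ _ t
  have hbound : ∀ t ∈ Set.Ico (0 : ℝ) 1,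
      ‖F' (w ++ a) t - F' (w ++ c) t‖ ≤ kap R θ * C * rho R θ w.length := by
    intro t ht
    have hv : Hol (θ ^ ·) R (fun x => v₂ x + t * g x) := fun w a c => by
      have e1 := h₁ w a c
      have e2 := h₂ w a c
      have : v₂ (w ++ a) + t * g (w ++ a) - (v₂ (w ++ c) + t * g (w ++ c)) =
          t * (v₁ (w ++ a) - v₁ (w ++ c)) + (1 - t) * (v₂ (w ++ a) - v₂ (w ++ c)) := by
        simp only [hgdef]; ring
      simp only [this]
      refine (abs_add_le _ _).trans ?_
      rw [abs_mul, abs_mul, abs_of_nonneg ht.1, abs_of_nonneg (sub_nonneg.2 ht.2.le)]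
      have f1 := mul_le_mul_of_nonneg_left e1 ht.1
      have f2 := mul_le_mul_of_nonneg_left e2 (sub_nonneg.2 ht.2.le)
      simp only at f1 f2
      linarith
    have := markov_contract hR0 hθ0 hθ1 (fun i => Hol.weights hψ hθ0 hR hv i) hC hg w a c
    simpa only [Real.norm_eq_abs, F', add_assoc] using this
  have := norm_image_sub_le_of_norm_deriv_le_segment_01'
    (f := fun t => F (w ++ a) t - F (w ++ c) t)
    (fun t _ => ((hF (w ++ a) t).sub (hF (w ++ c) t)).hasDerivWithinAt) hbound
  have f1 : ∀ x, F x 1 = lse ψ v₁ x := fun x => by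
    simp only [F, lse, hgdef]
    congr 1
    exact Finset.sum_congr rfl fun i _ => by congr 1; ring
  have f0 : ∀ x, F x 0 = lse ψ v₂ x := fun x => by simp only [F, lse, zero_mul, add_zero]
  rw [Real.norm_eq_abs] at this
  simp only [f1, f0] at this
  rw [show lse ψ v₁ (w ++ a) - lse ψ v₂ (w ++ a) - (lse ψ v₁ (w ++ c) - lse ψ v₂ (w ++ c)) =
    lse ψ v₁ (w ++ a) - lse ψ v₁ (w ++ c) - (lse ψ v₂ (w ++ a) - lse ψ v₂ (w ++ c)) by ring]
  exact this

/-- Existence of the logarithm `v` of a positive eigenfunction, normalised at the empty word. -/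
lemma exists_lse_fixed (hθ0 : 0 < θ) (hθ1 : θ < 1) (hR0 : 0 < R)
    (hψ : ∀ i, Hol (θ ^ ·) B₀ (ψ i)) (hR : B₀ + θ * R ≤ R) :
    ∃ v : List ι → ℝ, Hol (θ ^ ·) R v ∧ v [] = 0 ∧ ∃ c : ℝ, ∀ x, lse ψ v x = v x + c := by
  let V : ℕ → List ι → ℝ := fun n => Nat.rec (fun _ => 0) (fun _ u x => lse ψ u x - lse ψ u []) n
  have hV0 : ∀ x, V 0 x = 0 := fun x => rfl
  have hVs : ∀ n x, V (n + 1) x = lse ψ (V n) x - lse ψ (V n) [] := fun n x => rfl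
  have hVe : ∀ n, V n [] = 0 := fun n => by cases n with
    | zero => rfl
    | succ n => rw [hVs, sub_self]
  have hVH : ∀ n, Hol (θ ^ ·) R (V n) := fun n => by
    induction n with
    | zero => intro w a c; simp only [hV0, sub_self, abs_zero]; positivity
    | succ n ih =>
      intro w a c
      have := Hol.lse hψ hθ0 hR ih w a c
      rw [hVs, hVs, sub_sub_sub_cancel_right]
      exact this
  have hκ0 := kap_nonneg hR0 hθ0 hθ1
  have hκ1 : kap R θ < 1 := kap_lt_one hθ1
  have hρ0 := rho_pos hR0 hθ0 hθ1 0
  set C₀ := R / rho R θ 0 with hC₀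
  have hC₀0 : 0 ≤ C₀ := by positivity
  have hdiff : ∀ n, Hol (rho R θ) (kap R θ ^ n * C₀) (fun x => V (n + 1) x - V n x) := fun n => by
    induction n with
    | zero =>
      have := (hVH 1).rho_of_pow hR0 hθ0 hθ1 hR0.le
      simpa [hV0] using this
    | succ n ih =>
      intro w a c
      have := lse_contract hθ0 hθ1 hR0 hψ hR (hVH (n + 1)) (hVH n) (by positivity) ih w a c
      rw [show kap R θ ^ (n + 1) * C₀ = kap R θ * (kap R θ ^ n * C₀) by ring]
      convert this using 2
      simp only [hVs]
      ring
  have hpt : ∀ x n, dist (V n x) (V (n + 1) x) ≤ C₀ * kap R θ ^ n := fun x n => by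
    have := hdiff n [] x []
    simp only [List.nil_append, hVe, sub_self, sub_zero, List.length_nil] at this
    rw [dist_comm, Real.dist_eq]
    refine this.trans ?_
    rw [mul_comm (kap R θ ^ n)]
    exact mul_le_of_le_one_right (by positivity) (rho_le_one 0)
  have hlim : ∀ x, ∃ l, Tendsto (fun n => V n x) atTop (𝓝 l) := fun x =>
    cauchySeq_tendsto_of_complete (cauchySeq_of_le_geometric _ _ hκ1 (hpt x))
  choose v hv using hlim
  refine ⟨v, fun w a c => ?_, ?_, lse ψ v [], fun x => ?_⟩
  · exact le_of_tendsto ((hv _).sub (hv _)).abs (Eventually.of_forall fun n => hVH n w a c)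
  · refine tendsto_nhds_unique (hv []) ?_
    simp only [hVe]
    exact tendsto_const_nhds
  · have hT : ∀ x, Tendsto (fun n => lse ψ (V n) x) atTop (𝓝 (lse ψ v x)) := fun x => by
      refine Tendsto.log ?_ (sum_exp_pos _).ne'
      exact tendsto_finsetSum _ fun i _ => ((hv (i :: x)).const_add (ψ i x)).rexp
    have h1 := (hv x).comp (tendsto_add_atTop_nat 1)
    have h2 := (hT x).sub (hT [])
    have := tendsto_nhds_unique h1 h2
    linarith

end Fixed

/-! ### The Banach space of Hölder functions on words -/

/-- The index set for the sup norm defining the Hölder space: points, and triples `(w, a, c)`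
standing for the pair of words `w ++ a`, `w ++ c` with common prefix `w`. -/
inductive Idx (ι : Type*) : Type _
  | pt (x : List ι)
  | pair (w a c : List ι)

instance (ι : Type*) : TopologicalSpace (Idx ι) := ⊥

instance (ι : Type*) : DiscreteTopology (Idx ι) := ⟨rfl⟩

/-- The space of bounded functions on words with modulus of continuity `ρ`, realised as the closed
subspace of bounded functions on `Idx ι` consisting of a function `u` together with its difference
quotients `(u (w ++ a) - u (w ++ c)) / ρ |w|`. Its norm is the larger of the sup norm and the best
modulus constant. -/
def holSubmodule (ι : Type*) (ρ : ℕ → ℝ) : Submodule ℝ (BoundedContinuousFunction (Idx ι) ℝ) where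
  carrier := {b | ∀ w a c : List ι,
    b (Idx.pair w a c) * ρ w.length = b (Idx.pt (w ++ a)) - b (Idx.pt (w ++ c))}
  add_mem' := by
    intro b b' hb hb' w a c
    have h1 := hb w a c
    have h2 := hb' w a c
    simp only [BoundedContinuousFunction.coe_add, Pi.add_apply]
    linarith
  zero_mem' := by intro w a c; simp
  smul_mem' := by
    intro t b hb w a c
    have h1 := hb w a c
    simp only [BoundedContinuousFunction.coe_smul, smul_eq_mul]
    linear_combination t * h1

/-- The Banach space carried by `holSubmodule ι ρ`. -/
def HolSpace (ι : Type*) (ρ : ℕ → ℝ) : Type _ := holSubmodule ι ρ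

namespace HolSpace

variable {ι : Type*} {ρ : ℕ → ℝ}

instance : NormedAddCommGroup (HolSpace ι ρ) :=
  inferInstanceAs (NormedAddCommGroup (holSubmodule ι ρ))

instance : NormedSpace ℝ (HolSpace ι ρ) := inferInstanceAs (NormedSpace ℝ (holSubmodule ι ρ))

instance : CompleteSpace (HolSpace ι ρ) := by
  suffices h : IsClosed (holSubmodule ι ρ : Set (BoundedContinuousFunction (Idx ι) ℝ)) from
    h.completeSpace_coe
  have : (holSubmodule ι ρ : Set (BoundedContinuousFunction (Idx ι) ℝ)) =
      ⋂ (w : List ι) (a : List ι) (c : List ι), {b | b (Idx.pair w a c) * ρ w.length =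
        b (Idx.pt (w ++ a)) - b (Idx.pt (w ++ c))} := by
    ext b; simp only [Set.mem_iInter]; rfl
  rw [this]
  refine isClosed_iInter fun w => isClosed_iInter fun a => isClosed_iInter fun c => ?_
  have hc : ∀ i : Idx ι, Continuous fun b : BoundedContinuousFunction (Idx ι) ℝ => b i :=
    fun i => (BoundedContinuousFunction.evalCLM ℝ i).continuous
  exact isClosed_eq ((hc _).mul continuous_const) ((hc _).sub (hc _))

/-- The underlying function on words. -/
def fn (u : HolSpace ι ρ) (x : List ι) : ℝ := u.1 (Idx.pt x)

lemma fn_add (u v : HolSpace ι ρ) (x : List ι) : fn (u + v) x = fn u x + fn v x := rfl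
lemma fn_sub (u v : HolSpace ι ρ) (x : List ι) : fn (u - v) x = fn u x - fn v x := rfl
lemma fn_smul (t : ℝ) (u : HolSpace ι ρ) (x : List ι) : fn (t • u) x = t * fn u x := rfl

/-- Evaluation at a word. -/
def ev (x : List ι) : HolSpace ι ρ →L[ℝ] ℝ :=
  (BoundedContinuousFunction.evalCLM ℝ (Idx.pt x)).comp (holSubmodule ι ρ).subtypeL

lemma ev_apply (x : List ι) (u : HolSpace ι ρ) : ev x u = fn u x := rfl

lemma fn_sum {κ : Type*} (t : Finset κ) (u : κ → HolSpace ι ρ) (x : List ι) :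
    fn (∑ i ∈ t, u i) x = ∑ i ∈ t, fn (u i) x :=
  map_sum (ev x) u t

lemma abs_fn_le (u : HolSpace ι ρ) (x : List ι) : |fn u x| ≤ ‖u‖ :=
  u.1.norm_coe_le_norm (Idx.pt x)

lemma hol_fn (hρ : ∀ n, 0 < ρ n) (u : HolSpace ι ρ) : Hol ρ ‖u‖ (fn u) := fun w a c => by
  have h1 := u.2 w a c
  have h2 : |u.1 (Idx.pair w a c)| ≤ ‖u‖ := u.1.norm_coe_le_norm _
  unfold fn
  rw [← h1, abs_mul, abs_of_pos (hρ _)]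
  exact mul_le_mul_of_nonneg_right h2 (hρ _).le

lemma fn_ext (hρ : ∀ n, 0 < ρ n) {u v : HolSpace ι ρ} (h : ∀ x, fn u x = fn v x) : u = v := by
  refine Subtype.ext (BoundedContinuousFunction.ext fun i => ?_)
  rcases i with x | ⟨w, a, c⟩
  · exact h x
  · refine mul_right_cancel₀ (hρ w.length).ne' ?_
    rw [u.2 w a c, v.2 w a c]
    exact congrArg₂ (· - ·) (h _) (h _)

lemma norm_le_of_forall {u : HolSpace ι ρ} (hρ : ∀ n, 0 < ρ n) {C : ℝ}
    (h1 : ∀ x, |fn u x| ≤ C) (h2 : Hol ρ C (fn u)) : ‖u‖ ≤ C := by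
  have hC : 0 ≤ C := (abs_nonneg _).trans (h1 [])
  refine (BoundedContinuousFunction.norm_le hC).2 fun i => ?_
  rcases i with x | ⟨w, a, c⟩
  · exact h1 x
  · refine le_of_mul_le_mul_right ?_ (hρ w.length)
    have := h2 w a c
    unfold fn at this
    rwa [← u.2 w a c, abs_mul, abs_of_pos (hρ _)] at this

/-- A bounded function with modulus `ρ`, as an element of the Hölder space. -/
def mk (hρ : ∀ n, 0 < ρ n) (f : List ι → ℝ) (C : ℝ) (h1 : ∀ x, |f x| ≤ C) (h2 : Hol ρ C f) :
    HolSpace ι ρ :=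
  ⟨BoundedContinuousFunction.ofNormedAddCommGroupDiscrete
    (fun i : Idx ι => match i with
      | .pt x => f x
      | .pair w a c => (f (w ++ a) - f (w ++ c)) / ρ w.length)
    C (by
      rintro (x | ⟨w, a, c⟩)
      · exact h1 x
      · simp only [Real.norm_eq_abs, abs_div, abs_of_pos (hρ w.length)]
        exact (div_le_iff₀ (hρ _)).2 (h2 w a c)),
    fun w a c => div_mul_cancel₀ _ (hρ w.length).ne'⟩

lemma fn_mk (hρ : ∀ n, 0 < ρ n) (f : List ι → ℝ) (C : ℝ) (h1 : ∀ x, |f x| ≤ C)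
    (h2 : Hol ρ C f) (x : List ι) : fn (mk hρ f C h1 h2) x = f x := rfl

/-- The bounded operator on the Hölder space induced by a linear map on functions. -/
def op (hρ : ∀ n, 0 < ρ n) (Φ : (List ι → ℝ) →ₗ[ℝ] (List ι → ℝ)) (K : ℝ)
    (hΦ : ∀ C : ℝ, 0 ≤ C → ∀ f : List ι → ℝ, (∀ x, |f x| ≤ C) → Hol ρ C f →
      (∀ x, |Φ f x| ≤ K * C) ∧ Hol ρ (K * C) (Φ f)) : HolSpace ι ρ →L[ℝ] HolSpace ι ρ :=
  LinearMap.mkContinuous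
    { toFun := fun u => mk hρ (Φ (fn u)) (K * ‖u‖)
        (hΦ _ (norm_nonneg u) _ (abs_fn_le u) (hol_fn hρ u)).1
        (hΦ _ (norm_nonneg u) _ (abs_fn_le u) (hol_fn hρ u)).2
      map_add' := fun u v => fn_ext hρ fun x => by
        rw [fn_add, fn_mk, fn_mk, fn_mk, show fn (u + v) = fn u + fn v from rfl, map_add]
        rfl
      map_smul' := fun t u => fn_ext hρ fun x => by
        rw [RingHom.id_apply, fn_smul, fn_mk, fn_mk, show fn (t • u) = t • fn u from rfl, map_smul]
        rfl }
    K fun u => norm_le_of_forall hρ (hΦ _ (norm_nonneg u) _ (abs_fn_le u) (hol_fn hρ u)).1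
      (hΦ _ (norm_nonneg u) _ (abs_fn_le u) (hol_fn hρ u)).2

lemma fn_op (hρ : ∀ n, 0 < ρ n) (Φ : (List ι → ℝ) →ₗ[ℝ] (List ι → ℝ)) (K : ℝ) (hΦ) 
    (u : HolSpace ι ρ) (x : List ι) : fn (op hρ Φ K hΦ u) x = Φ (fn u) x := rfl

lemma norm_op_le (hρ : ∀ n, 0 < ρ n) (Φ : (List ι → ℝ) →ₗ[ℝ] (List ι → ℝ)) {K : ℝ} (hK : 0 ≤ K)
    (hΦ) : ‖(op hρ Φ K hΦ : HolSpace ι ρ →L[ℝ] HolSpace ι ρ)‖ ≤ K :=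
  LinearMap.mkContinuous_norm_le _ hK _

/-- Multiplication by a Hölder function. -/
def mulOp (hρ : ∀ n, 0 < ρ n) (g : HolSpace ι ρ) : HolSpace ι ρ →L[ℝ] HolSpace ι ρ :=
  op hρ (LinearMap.mulLeft ℝ (fn g)) (2 * ‖g‖) fun C hC f h1 h2 => by
    have hg := abs_fn_le g
    refine ⟨fun x => ?_, fun w a c => ?_⟩
    · rw [LinearMap.mulLeft_apply, Pi.mul_apply, abs_mul]
      have := mul_le_mul (hg x) (h1 x) (abs_nonneg _) (norm_nonneg g)
      nlinarith [mul_nonneg (norm_nonneg g) hC]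
    · rw [LinearMap.mulLeft_apply, Pi.mul_apply, Pi.mul_apply]
      have e1 := hol_fn hρ g w a c
      have e2 := h2 w a c
      have hr := (hρ w.length).le
      calc |fn g (w ++ a) * f (w ++ a) - fn g (w ++ c) * f (w ++ c)|
          = |fn g (w ++ a) * (f (w ++ a) - f (w ++ c)) +
              (fn g (w ++ a) - fn g (w ++ c)) * f (w ++ c)| := by congr 1; ring
        _ ≤ |fn g (w ++ a)| * |f (w ++ a) - f (w ++ c)| +
              |fn g (w ++ a) - fn g (w ++ c)| * |f (w ++ c)| := by
            rw [← abs_mul, ← abs_mul]; exact abs_add_le _ _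
        _ ≤ ‖g‖ * (C * ρ w.length) + (‖g‖ * ρ w.length) * C :=
            add_le_add (mul_le_mul (hg _) e2 (abs_nonneg _) (norm_nonneg g))
              (mul_le_mul e1 (h1 _) (abs_nonneg _) (mul_nonneg (norm_nonneg g) hr))
        _ = 2 * ‖g‖ * C * ρ w.length := by ring

lemma fn_mulOp (hρ : ∀ n, 0 < ρ n) (g u : HolSpace ι ρ) (x : List ι) :
    fn (mulOp hρ g u) x = fn g x * fn u x := rfl

/-- Precomposition with the inverse branch `x ↦ i :: x`. -/
def consOp (hρ : ∀ n, 0 < ρ n) (hanti : ∀ n, ρ (n + 1) ≤ ρ n) (i : ι) :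
    HolSpace ι ρ →L[ℝ] HolSpace ι ρ :=
  op hρ (LinearMap.funLeft ℝ ℝ (i :: ·)) 1 fun C hC f h1 h2 => by
    refine ⟨fun x => ?_, fun w a c => ?_⟩
    · rw [one_mul]; exact h1 _
    · rw [one_mul]
      exact (h2 (i :: w) a c).trans (mul_le_mul_of_nonneg_left (hanti _) hC)

lemma fn_consOp (hρ : ∀ n, 0 < ρ n) (hanti : ∀ n, ρ (n + 1) ≤ ρ n) (i : ι) (u : HolSpace ι ρ)
    (x : List ι) : fn (consOp hρ hanti i u) x = fn u (i :: x) := rfl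

/-- The operator exponential of a multiplication operator acts as multiplication by the pointwise
exponential. -/
lemma fn_exp_mulOp (hρ : ∀ n, 0 < ρ n) (g u : HolSpace ι ρ) (s : ℝ) (x : List ι) :
    fn (NormedSpace.exp (s • mulOp hρ g) u) x = Real.exp (s * fn g x) * fn u x := by
  have h1 := (NormedSpace.exp_series_hasSum_exp' (𝕂 := ℝ) (s • mulOp hρ g)).mapL
    ((ev x).comp (ContinuousLinearMap.apply ℝ (HolSpace ι ρ) u))
  have h2 := (NormedSpace.exp_series_hasSum_exp' (𝕂 := ℝ) (s * fn g x)).mul_right (fn u x)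
  rw [← Real.exp_eq_exp_ℝ] at h2
  have hpow : ∀ n : ℕ, fn (((s • mulOp hρ g) ^ n) u) x = (s * fn g x) ^ n * fn u x := by
    intro n
    induction n with
    | zero => simp
    | succ n ih =>
      rw [pow_succ', mul_apply_eq_comp, smul_apply, fn_smul,
        fn_mulOp, ih]
      ring
  have e : (fun n : ℕ => ((ev x).comp (ContinuousLinearMap.apply ℝ (HolSpace ι ρ) u))
      ((n.factorial : ℝ)⁻¹ • (s • mulOp hρ g) ^ n)) =
      fun n : ℕ => (n.factorial : ℝ)⁻¹ • (s * fn g x) ^ n * fn u x := funext fun n => by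
    rw [map_smul, smul_eq_mul, smul_eq_mul, mul_assoc, ← hpow]
    rfl
  rw [e] at h1
  exact h1.unique h2

end HolSpace

/-! ### Analytic perturbation of a simple eigenvalue -/

open scoped ContDiff

/-- Analytic persistence of a normalised eigenvector. The equation `L y f = ℓ (L y f) • f` is solved
for `f` near `h` by the implicit function theorem; `hD` says that its partial derivative in `f` at
`(y₀, h)` is invertible. -/
lemma exists_eigen_branch {E : Type*} [NormedAddCommGroup E] [NormedSpace ℝ E] [CompleteSpace E]
    {L : ℝ × ℝ → E →L[ℝ] E} {y₀ : ℝ × ℝ} (hL : ContDiffAt ℝ ω L y₀) {h : E} {ℓ : E →L[ℝ] ℝ} {l : ℝ}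
    (hh : L y₀ h = l • h) (hℓ : ℓ h = 1)
    (hD : (L y₀ - (l • ContinuousLinearMap.id ℝ E + (ℓ.comp (L y₀)).smulRight h)).IsInvertible) :
    ∃ f : ℝ × ℝ → E, f y₀ = h ∧ ContDiffAt ℝ ω f y₀ ∧
      ∀ᶠ y in 𝓝 y₀, L y (f y) = ℓ (L y (f y)) • f y := by
  have hℓL : ℓ (L y₀ h) = l := by rw [hh, map_smul, hℓ, smul_eq_mul, mul_one]
  let F : (ℝ × ℝ) × E → E := fun z => L z.1 z.2 - ℓ (L z.1 z.2) • z.2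
  have hF : ContDiffAt ℝ ω F (y₀, h) := by
    have h1 : ContDiffAt ℝ ω (fun z : (ℝ × ℝ) × E => L z.1 z.2) (y₀, h) :=
      (ContDiffAt.comp (y₀, h) (f := Prod.fst) hL contDiffAt_fst).clm_apply contDiffAt_snd
    exact h1.sub ((ℓ.contDiff.contDiffAt.comp _ h1).smul contDiffAt_snd)
  have hn : (ω : WithTop ℕ∞) ≠ 0 := by simp
  have h0 : F (y₀, h) = 0 := by simp only [F]; rw [hℓL, hh, sub_self]
  have hd : fderiv ℝ F (y₀, h) ∘L ContinuousLinearMap.inr ℝ (ℝ × ℝ) E =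
      L y₀ - (l • ContinuousLinearMap.id ℝ E + (ℓ.comp (L y₀)).smulRight h) := by
    have e1 := (hF.differentiableAt hn).hasFDerivAt.comp h (hasFDerivAt_prodMk_right y₀ h)
    have e2 := (L y₀).hasFDerivAt (x := h)
    have e3 := e2.sub (((ℓ.hasFDerivAt (x := L y₀ h)).comp h e2).smul (hasFDerivAt_id h))
    refine e1.unique (e3.congr_fderiv ?_)
    simp [hℓL]
  have hI : (fderiv ℝ F (y₀, h) ∘L ContinuousLinearMap.inr ℝ (ℝ × ℝ) E).IsInvertible := hd ▸ hD
  refine ⟨hF.implicitFunction hn hI, hF.implicitFunction_apply_self hn hI,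
    hF.contDiffAt_implicitFunction hn hI, ?_⟩
  filter_upwards [hF.eventually_apply_implicitFunction hn hI] with y hy
  exact sub_eq_zero.1 (hy.trans h0)

/-! ### Eigenfunctions of the transfer operators -/

section Transfer

open HolSpace

variable {ι : Type*} [Fintype ι] {ρ : ℕ → ℝ}

/-- The transfer operator `f ↦ ∑ i, exp (q * lp i + s * φ i x) * f (i :: x)` at the parameter
`y = (q, s)`. -/
def transfer (hρ : ∀ n, 0 < ρ n) (hanti : ∀ n, ρ (n + 1) ≤ ρ n) (lp : ι → ℝ)
    (φ : ι → HolSpace ι ρ) (y : ℝ × ℝ) : HolSpace ι ρ →L[ℝ] HolSpace ι ρ :=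
  ∑ i, Real.exp (y.1 * lp i) • NormedSpace.exp (y.2 • mulOp hρ (φ i)) ∘L consOp hρ hanti i

lemma fn_transfer (hρ : ∀ n, 0 < ρ n) (hanti : ∀ n, ρ (n + 1) ≤ ρ n) (lp : ι → ℝ)
    (φ : ι → HolSpace ι ρ) (y : ℝ × ℝ) (u : HolSpace ι ρ) (x : List ι) :
    fn (transfer hρ hanti lp φ y u) x =
      ∑ i, Real.exp (y.1 * lp i + y.2 * fn (φ i) x) * fn u (i :: x) := by
  rw [transfer, sum_apply, fn_sum]
  refine Finset.sum_congr rfl fun i _ => ?_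
  rw [smul_apply, fn_smul, ContinuousLinearMap.comp_apply, fn_exp_mulOp, fn_consOp, Real.exp_add,
    mul_assoc]

lemma contDiff_transfer (hρ : ∀ n, 0 < ρ n) (hanti : ∀ n, ρ (n + 1) ≤ ρ n) (lp : ι → ℝ)
    (φ : ι → HolSpace ι ρ) : ContDiff ℝ ω (transfer hρ hanti lp φ) := by
  unfold transfer
  refine ContDiff.sum fun i _ => ?_
  refine ContDiff.smul (contDiff_fst.mul contDiff_const).exp (ContDiff.clm_comp ?_ contDiff_const)
  have h : ContDiff ℝ ω
      (NormedSpace.exp : (HolSpace ι ρ →L[ℝ] HolSpace ι ρ) → (HolSpace ι ρ →L[ℝ] HolSpace ι ρ)) :=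
    contDiff_iff_contDiffAt.2 fun x => (NormedSpace.exp_analytic (𝕂 := ℝ) x).contDiffAt
  exact h.comp (contDiff_snd.smul contDiff_const)

/-- The centred Markov operator `f ↦ P f - P f []`, with `P` given by softmax weights. -/
def centred (a : ι → List ι → ℝ) : (List ι → ℝ) →ₗ[ℝ] (List ι → ℝ) where
  toFun f x := ∑ i, softmax (a · x) i * f (i :: x) - ∑ i, softmax (a · []) i * f [i]
  map_add' f g := funext fun x => by
    simp only [Pi.add_apply, mul_add, Finset.sum_add_distrib]; ring
  map_smul' t f := funext fun x => by
    simp only [Pi.smul_apply, smul_eq_mul, RingHom.id_apply, mul_left_comm _ t, ← Finset.mul_sum]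
    ring

/-- Multiplying by `h` and by `1 / h` turns a transfer operator with eigenfunction `h` into a Markov
operator; once centred, that one has norm less than `1`, so the linearised eigenvalue equation is
invertible. -/
lemma transfer_linearised_invertible [Nonempty ι] {θ R : ℝ} (hθ0 : 0 < θ) (hθ1 : θ < 1)
    (hR : 0 < R) {a ψ : ι → List ι → ℝ} (ha : ∀ i, Hol (θ ^ ·) R (a i))
    (hρ : ∀ n, 0 < rho R θ n) {h h' : HolSpace ι (rho R θ)}
    (hh : ∀ x, fn h x * fn h' x = 1) (h0 : fn h [] = 1) {l : ℝ} (hl : l ≠ 0)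
    {L : HolSpace ι (rho R θ) →L[ℝ] HolSpace ι (rho R θ)}
    (hL : ∀ u x, fn (L u) x = ∑ i, Real.exp (ψ i x) * fn u (i :: x))
    (hw : ∀ i x, l * fn h x * (softmax (a · x) i * fn h' (i :: x)) = Real.exp (ψ i x)) :
    (L - (l • ContinuousLinearMap.id ℝ _ + ((ev []).comp L).smulRight h)).IsInvertible := by
  have hk0 := kap_nonneg hR hθ0 hθ1
  have hQ : ∀ C : ℝ, 0 ≤ C → ∀ f : List ι → ℝ, (∀ x, |f x| ≤ C) → Hol (rho R θ) C f →
      (∀ x, |centred a f x| ≤ kap R θ * C) ∧ Hol (rho R θ) (kap R θ * C) (centred a f) := by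
    intro C hC f _ h2
    have hm := markov_contract hR hθ0 hθ1 ha hC h2
    refine ⟨fun x => ?_, fun w b c => ?_⟩
    · refine (hm [] x []).trans ?_
      exact mul_le_of_le_one_right (mul_nonneg hk0 hC) (rho_le_one _)
    · refine le_trans (le_of_eq ?_) (hm w b c)
      simp only [centred, LinearMap.coe_mk, AddHom.coe_mk]
      congr 1; ring
  let Q := op hρ (centred a) (kap R θ) hQ
  have hQn : ‖Q‖ < 1 := (norm_op_le hρ _ hk0 hQ).trans_lt (kap_lt_one hθ1)
  obtain ⟨U, hU⟩ := isUnit_one_sub_of_norm_lt_one hQn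
  have i1 : (1 - Q).IsInvertible := ⟨ContinuousLinearEquiv.ofUnit U, hU⟩
  have i2 : (mulOp hρ h).IsInvertible := .of_inverse (g := mulOp hρ h')
    (ContinuousLinearMap.ext fun u => fn_ext hρ fun x => by
      simp only [ContinuousLinearMap.comp_apply, fn_mulOp, ContinuousLinearMap.id_apply]
      linear_combination fn u x * hh x)
    (ContinuousLinearMap.ext fun u => fn_ext hρ fun x => by
      simp only [ContinuousLinearMap.comp_apply, fn_mulOp, ContinuousLinearMap.id_apply]
      linear_combination fn u x * hh x)
  have i3 : (mulOp hρ h').IsInvertible := .of_inverse (g := mulOp hρ h)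
    (ContinuousLinearMap.ext fun u => fn_ext hρ fun x => by
      simp only [ContinuousLinearMap.comp_apply, fn_mulOp, ContinuousLinearMap.id_apply]
      linear_combination fn u x * hh x)
    (ContinuousLinearMap.ext fun u => fn_ext hρ fun x => by
      simp only [ContinuousLinearMap.comp_apply, fn_mulOp, ContinuousLinearMap.id_apply]
      linear_combination fn u x * hh x)
  have i4 : ((-l) • ContinuousLinearMap.id ℝ (HolSpace ι (rho R θ))).IsInvertible :=
    .of_inverse (g := (-l)⁻¹ • ContinuousLinearMap.id ℝ (HolSpace ι (rho R θ)))
      (ContinuousLinearMap.ext fun u => by simp [smul_smul, hl])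
      (ContinuousLinearMap.ext fun u => by simp [smul_smul, hl])
  convert i4.comp (i2.comp (i1.comp i3)) using 1
  refine ContinuousLinearMap.ext fun u => fn_ext hρ fun x => ?_
  have hS : ∀ x, l * fn h x * ∑ i, softmax (a · x) i * (fn h' (i :: x) * fn u (i :: x)) =
      fn (L u) x := fun x => by
    rw [hL, Finset.mul_sum]
    refine Finset.sum_congr rfl fun i _ => ?_
    rw [← hw i x]; ring
  have hx := hS x
  have he := hS []
  rw [h0] at he
  have e1 : fn (((-l) • ContinuousLinearMap.id ℝ (HolSpace ι (rho R θ))).comp ((mulOp hρ h).comp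
      ((1 - Q).comp (mulOp hρ h'))) u) x = (-l) * (fn h x * (fn h' x * fn u x -
        (∑ i, softmax (a · x) i * (fn h' (i :: x) * fn u (i :: x)) -
          ∑ i, softmax (a · []) i * (fn h' [i] * fn u [i])))) := rfl
  have e2 : fn ((L - (l • ContinuousLinearMap.id ℝ (HolSpace ι (rho R θ)) + ((ev []).comp L).smulRight h)) u) x =
      fn (L u) x - (l * fn u x + fn (L u) [] * fn h x) := rfl
  rw [e1, e2, ← hx, ← he]
  linear_combination l * fn u x * hh x

/-- Around every parameter the transfer operators have a positive eigenfunction, bounded above and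
below, whose eigenvalue depends analytically on the parameter. -/
theorem exists_analytic_eigenvalue [Nonempty ι] {θ C₀ : ℝ} (hθ0 : 0 < θ) (hθ1 : θ < 1)
    (hC₀ : 0 ≤ C₀) {φ : ι → List ι → ℝ} (hφ : ∀ i, Hol (θ ^ ·) C₀ (φ i)) (lp : ι → ℝ)
    (y₀ : ℝ × ℝ) :
    ∃ Λ : ℝ × ℝ → ℝ, AnalyticAt ℝ Λ y₀ ∧ ∀ᶠ y in 𝓝 y₀, 0 < Λ y ∧
      ∃ f : List ι → ℝ, ∃ m > 0, ∃ M, (∀ x, m ≤ f x ∧ f x ≤ M) ∧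
        ∀ x, ∑ i, Real.exp (y.1 * lp i + y.2 * φ i x) * f (i :: x) = Λ y * f x := by
  have h1θ : 0 < 1 - θ := by linarith
  set B₀ := |y₀.2| * C₀ with hB₀
  have hB₀0 : 0 ≤ B₀ := by positivity
  set R := B₀ / (1 - θ) + 1 with hRdef
  have hR0 : 0 < R := by positivity
  have hR : B₀ + θ * R ≤ R := by
    have : (1 - θ) * R = B₀ + (1 - θ) := by rw [hRdef]; field_simp
    linarith
  let ψ : ι → List ι → ℝ := fun i x => y₀.1 * lp i + y₀.2 * φ i x
  have hψ : ∀ i, Hol (θ ^ ·) B₀ (ψ i) := fun i w a c => by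
    have := mul_le_mul_of_nonneg_left (hφ i w a c) (abs_nonneg y₀.2)
    rw [← abs_mul] at this
    calc |ψ i (w ++ a) - ψ i (w ++ c)| = |y₀.2 * (φ i (w ++ a) - φ i (w ++ c))| := by
          congr 1; simp only [ψ]; ring
      _ ≤ _ := by rw [hB₀, mul_assoc]; exact this
  obtain ⟨v, hv, hv0, c, hc⟩ := exists_lse_fixed hθ0 hθ1 hR0 hψ hR
  have hρ : ∀ n, 0 < rho R θ n := rho_pos hR0 hθ0 hθ1
  have hanti : ∀ n, rho R θ (n + 1) ≤ rho R θ n := rho_anti hR0 hθ0 hθ1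
  have hvb : ∀ x, |v x| ≤ R := fun x => by
    have := hv [] x []
    simpa [hv0] using this
  -- the Hölder space element attached to a function that is Hölder for `θ ^ n`
  have lift : ∀ (C : ℝ) (g : List ι → ℝ), Hol (θ ^ ·) C g →
      ∃ u : HolSpace ι (rho R θ), ∀ x, fn u x = g x := by
    intro C g hg
    have hC : 0 ≤ C := by simpa using (abs_nonneg _).trans (hg [] [] [])
    have h2 := Hol.rho_of_pow hR0 hθ0 hθ1 hC hg
    have hb : ∀ x, |g x| ≤ |g []| + C := fun x => by
      have := hg [] x []
      simp only [List.nil_append, List.length_nil, pow_zero, mul_one] at this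
      have h3 := abs_add_le (g x - g []) (g [])
      rw [sub_add_cancel] at h3
      linarith
    refine ⟨mk hρ g (max (|g []| + C) (C / rho R θ 0)) (fun x => (hb x).trans (le_max_left _ _))
      fun w a c => (h2 w a c).trans ?_, fun x => rfl⟩
    exact mul_le_mul_of_nonneg_right (le_max_right _ _) (hρ _).le
  have hexp : ∀ g : List ι → ℝ, Hol (θ ^ ·) R g → (∀ x, |g x| ≤ R) →
      Hol (θ ^ ·) (Real.exp R * R) (fun x => Real.exp (g x)) := by
    intro g hg hb w a c
    have key : ∀ s t : ℝ, s ≤ R → t ≤ R → |Real.exp s - Real.exp t| ≤ Real.exp R * |s - t| := by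
      have aux : ∀ s t : ℝ, s ≤ R → Real.exp s - Real.exp t ≤ Real.exp R * |s - t| := by
        intro s t hs
        have h1 : Real.exp s - Real.exp t ≤ Real.exp s * (s - t) := by
          have := Real.add_one_le_exp (t - s)
          have e : Real.exp t = Real.exp s * Real.exp (t - s) := by rw [← Real.exp_add]; congr 1; ring
          rw [e]
          nlinarith [Real.exp_pos s]
        refine h1.trans ?_
        refine (mul_le_mul_of_nonneg_left (le_abs_self _) (Real.exp_pos _).le).trans ?_
        exact mul_le_mul_of_nonneg_right (Real.exp_le_exp.2 hs) (abs_nonneg _)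
      intro s t hs ht
      refine abs_le.2 ⟨?_, aux s t hs⟩
      have := aux t s ht
      rw [abs_sub_comm] at this
      linarith
    refine (key _ _ ((le_abs_self _).trans (hb _)) ((le_abs_self _).trans (hb _))).trans ?_
    rw [mul_assoc]
    exact mul_le_mul_of_nonneg_left (hg w a c) (Real.exp_pos _).le
  choose Φ hΦ using fun i => lift C₀ (φ i) (hφ i)
  obtain ⟨h, hh⟩ := lift _ _ (hexp v hv hvb)
  obtain ⟨h', hh'⟩ := lift _ _ (hexp (fun x => -v x) (fun w a c => by
    rw [show -v (w ++ a) - -v (w ++ c) = -(v (w ++ a) - v (w ++ c)) by ring, abs_neg]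
    exact hv w a c) fun x => by rw [abs_neg]; exact hvb x)
  let L := transfer hρ hanti lp Φ
  have hLfn : ∀ y u x, fn (L y u) x = ∑ i, Real.exp (y.1 * lp i + y.2 * φ i x) * fn u (i :: x) :=
    fun y u x => by rw [fn_transfer]; simp only [hΦ]
  have hsum : ∀ x, ∑ i, Real.exp (ψ i x + v (i :: x)) = Real.exp c * Real.exp (v x) := fun x => by
    rw [← Real.exp_add, add_comm, ← hc x, lse, Real.exp_log (sum_exp_pos _)]
  have hinv : (L y₀ - (Real.exp c • ContinuousLinearMap.id ℝ _ +
      ((ev []).comp (L y₀)).smulRight h)).IsInvertible := by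
    refine transfer_linearised_invertible hθ0 hθ1 hR0 (Hol.weights hψ hθ0 hR hv) hρ (h' := h')
      (ψ := ψ) (fun x => ?_) ?_ (Real.exp_pos c).ne' (hLfn y₀) fun i x => ?_
    · rw [hh, hh', ← Real.exp_add, add_neg_cancel, Real.exp_zero]
    · rw [hh, hv0, Real.exp_zero]
    · rw [hh, hh', softmax, hsum, Real.exp_neg, Real.exp_add]
      have := Real.exp_ne_zero
      field_simp
  obtain ⟨f, hf0, hfc, hfe⟩ := exists_eigen_branch (L := L)
    (contDiff_transfer hρ hanti lp Φ).contDiffAt (ℓ := ev []) (l := Real.exp c) (h := h)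
    (fn_ext hρ fun x => by
      rw [hLfn, fn_smul, hh, ← hsum]
      exact Finset.sum_congr rfl fun i _ => by rw [hh, ← Real.exp_add])
    (by rw [ev_apply, hh, hv0, Real.exp_zero]) hinv
  have hΛ : ContDiffAt ℝ ω (fun y => ev [] (L y (f y))) y₀ :=
    (ev []).contDiff.contDiffAt.comp y₀
      ((contDiff_transfer hρ hanti lp Φ).contDiffAt.clm_apply hfc)
  refine ⟨fun y => ev [] (L y (f y)), hΛ.analyticAt, ?_⟩
  have hclose : ∀ᶠ y in 𝓝 y₀, ‖f y - h‖ < Real.exp (-R) / 2 := by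
    have := hfc.continuousAt
    rw [ContinuousAt, hf0, Metric.tendsto_nhds] at this
    simpa only [dist_eq_norm] using this _ (half_pos (Real.exp_pos _))
  filter_upwards [hfe, hclose] with y hy hcl
  have hm : ∀ x, Real.exp (-R) / 2 ≤ fn (f y) x := fun x => by
    have h1 := (abs_fn_le (f y - h) x).trans hcl.le
    rw [fn_sub, hh] at h1
    have h2 : Real.exp (-R) ≤ Real.exp (v x) := Real.exp_le_exp.2 (neg_le_of_abs_le (hvb x))
    linarith [neg_le_of_abs_le h1]
  have hpos : 0 < Real.exp (-R) / 2 := half_pos (Real.exp_pos _)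
  refine ⟨?_, fn (f y), _, hpos, ‖f y‖, fun x => ⟨hm x, (le_abs_self _).trans (abs_fn_le _ _)⟩,
    fun x => ?_⟩
  · rw [ev_apply, hLfn]
    exact Finset.sum_pos (fun i _ => mul_pos (Real.exp_pos _) (hpos.trans_le (hm _)))
      Finset.univ_nonempty
  · rw [← hLfn, ← fn_smul, ← hy]

end Transfer

/-! ### From eigenfunctions to the pressure -/

section Pressure

lemma wordWeight_pos {ι : Type*} {p : ι → ℝ} (hp : ∀ i, 0 < p i) (w : List ι) : 0 < wordWeight p w :=
  List.prod_pos (by simpa using fun i _ => hp i)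

variable {ι : Type*} [Fintype ι]

/-- The partition sum over words of length `n`, with the squared Frobenius norm in place of the
squared operator norm and with a test function `u`. -/
def partSum (A : ι → SL2) (p : ι → ℝ) (q s : ℝ) (u : List ι → ℝ) (n : ℕ) : ℝ :=
  ∑ w : Fin n → ι, wordWeight p (List.ofFn w) ^ q *
    fro (wordProd A (List.ofFn w) : Mat2) ^ s * u (List.ofFn w)

/-- Splitting off the first letter of a word turns a partition sum into a partition sum of the
transferred test function. -/
lemma partSum_succ (A : ι → SL2) {p : ι → ℝ} (hp : ∀ i, 0 < p i) (q s : ℝ) (u : List ι → ℝ)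
    (n : ℕ) : partSum A p q s u (n + 1) =
      partSum A p q s (fun x => ∑ i, Real.exp (q * Real.log (p i) + s * phi A i x) * u (i :: x))
        n := by
  unfold partSum
  rw [← (Fin.consEquiv fun _ : Fin (n + 1) => ι).sum_comp, Fintype.sum_prod_type_right]
  refine Finset.sum_congr rfl fun w _ => ?_
  rw [Finset.mul_sum]
  refine Finset.sum_congr rfl fun i _ => ?_
  have e : List.ofFn ((Fin.consEquiv fun _ : Fin (n + 1) => ι) (i, w)) = i :: List.ofFn w := by
    simp [Fin.consEquiv, List.ofFn_succ]
  rw [e]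
  have hW := wordWeight_pos hp (List.ofFn w)
  have e1 : wordWeight p (i :: List.ofFn w) = p i * wordWeight p (List.ofFn w) := by
    simp [wordWeight]
  have f0 := fro_pos (wordProd A (List.ofFn w))
  have f1 := fro_pos (wordProd A (i :: List.ofFn w))
  have e2 : fro (wordProd A (i :: List.ofFn w) : Mat2) ^ s =
      Real.exp (s * phi A i (List.ofFn w)) * fro (wordProd A (List.ofFn w) : Mat2) ^ s := by
    rw [Real.rpow_def_of_pos f0, Real.rpow_def_of_pos f1, ← Real.exp_add]
    congr 1
    unfold phi
    ring
  rw [e1, e2, Real.mul_rpow (hp i).le hW.le, Real.rpow_def_of_pos (hp i), Real.exp_add,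
    mul_comm (Real.log (p i))]
  ring

lemma partSum_eigen (A : ι → SL2) {p : ι → ℝ} (hp : ∀ i, 0 < p i) {q s l : ℝ} {u : List ι → ℝ}
    (hu : ∀ x, ∑ i, Real.exp (q * Real.log (p i) + s * phi A i x) * u (i :: x) = l * u x) (n : ℕ) :
    partSum A p q s u n = 2 ^ s * u [] * l ^ n := by
  induction n with
  | zero =>
    have h1 : fro (1 : Mat2) = 2 := by simpa using fro_one
    simp [partSum, wordWeight, wordProd, h1]
  | succ n ih =>
    rw [partSum_succ A hp, funext hu, pow_succ, ← mul_assoc, ← ih, partSum, partSum, Finset.sum_mul]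
    exact Finset.sum_congr rfl fun w _ => by ring

/-- Since `‖B‖²` and `fro B` agree up to a factor `2`, their `s`-th powers agree up to `2 ^ |s|`. -/
lemma opNorm_rpow_bounds (B : SL2) (s : ℝ) :
    2 ^ (-|s|) * fro (B : Mat2) ^ s ≤ opNorm (B : Mat2) ^ (2 * s) ∧
      opNorm (B : Mat2) ^ (2 * s) ≤ 2 ^ |s| * fro (B : Mat2) ^ s := by
  have hf := fro_pos B
  have h1 := opNorm_sq_le_fro (B : Mat2)
  have h2 := fro_le_two_opNorm_sq (B : Mat2)
  have hN : 0 ≤ opNorm (B : Mat2) := norm_nonneg _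
  have hN2 : 0 < opNorm (B : Mat2) ^ 2 := by linarith
  have e : opNorm (B : Mat2) ^ (2 * s) = (opNorm (B : Mat2) ^ 2) ^ s := by
    rw [Real.rpow_mul hN]; norm_num
  rw [e]
  generalize opNorm (B : Mat2) ^ 2 = X at *
  generalize fro (B : Mat2) = Y at *
  rw [Real.rpow_def_of_pos hN2, Real.rpow_def_of_pos hf, Real.rpow_def_of_pos two_pos,
    Real.rpow_def_of_pos two_pos, ← Real.exp_add, ← Real.exp_add, Real.exp_le_exp, Real.exp_le_exp]
  have l1 : Real.log X ≤ Real.log Y := Real.log_le_log hN2 h1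
  have l2 : Real.log Y ≤ Real.log 2 + Real.log X := by
    rw [← Real.log_mul two_ne_zero hN2.ne']; exact Real.log_le_log hf h2
  have l3 : |Real.log X - Real.log Y| ≤ Real.log 2 := by
    rw [abs_le]; exact ⟨by linarith, by linarith [Real.log_pos one_lt_two]⟩
  have l4 : |(Real.log X - Real.log Y) * s| ≤ Real.log 2 * |s| := by
    rw [abs_mul]; exact mul_le_mul_of_nonneg_right l3 (abs_nonneg s)
  rw [abs_le] at l4
  constructor <;> linarith [l4.1, l4.2]

/-- A sequence squeezed between two multiples of `l ^ n` has exponential growth rate `log l`. -/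
lemma tendsto_growth {Z : ℕ → ℝ} {l c₁ c₂ : ℝ} (hl : 0 < l) (hc₁ : 0 < c₁)
    (h₁ : ∀ n, c₁ * l ^ n ≤ Z n) (h₂ : ∀ n, Z n ≤ c₂ * l ^ n) :
    Tendsto (fun n : ℕ => 1 / (n : ℝ) * Real.logb 2 (Z n)) atTop (𝓝 (Real.logb 2 l)) := by
  have hc₂ : 0 < c₂ := by
    have := (h₁ 0).trans (h₂ 0)
    simp only [pow_zero, mul_one] at this
    linarith
  have lim : ∀ c : ℝ, Tendsto (fun n : ℕ => 1 / (n : ℝ) * c + Real.logb 2 l) atTop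
      (𝓝 (Real.logb 2 l)) := fun c => by
    simpa using (tendsto_one_div_atTop_nhds_zero_nat.mul_const c).add_const (Real.logb 2 l)
  have hlog : ∀ c : ℝ, 0 < c → ∀ n : ℕ, 0 < n →
      1 / (n : ℝ) * Real.logb 2 (c * l ^ n) = 1 / (n : ℝ) * Real.logb 2 c + Real.logb 2 l := by
    intro c hc n hn
    have : (n : ℝ) ≠ 0 := by positivity
    rw [Real.logb_mul hc.ne' (by positivity), Real.logb_pow]
    field_simp
  refine tendsto_of_tendsto_of_tendsto_of_le_of_le' (lim (Real.logb 2 c₁)) (lim (Real.logb 2 c₂))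
    ?_ ?_
  · filter_upwards [eventually_gt_atTop 0] with n hn
    rw [← hlog c₁ hc₁ n hn]
    exact mul_le_mul_of_nonneg_left
      (Real.logb_le_logb_of_le one_lt_two (by positivity) (h₁ n)) (by positivity)
  · filter_upwards [eventually_gt_atTop 0] with n hn
    rw [← hlog c₂ hc₂ n hn]
    have hZ : 0 < Z n := lt_of_lt_of_le (by positivity) (h₁ n)
    exact mul_le_mul_of_nonneg_left
      (Real.logb_le_logb_of_le one_lt_two hZ (h₂ n)) (by positivity)

/-- If the transfer operator at `(q, s)` has an eigenfunction bounded between positive constants,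
then the pressure at `(q, s)` is the logarithm of its eigenvalue. -/
lemma tendsto_psiAvg (A : ι → SL2) {p : ι → ℝ} (hp : ∀ i, 0 < p i) {q s l m M : ℝ} (hl : 0 < l)
    {u : List ι → ℝ} (hm : 0 < m) (hb : ∀ x, m ≤ u x ∧ u x ≤ M)
    (hu : ∀ x, ∑ i, Real.exp (q * Real.log (p i) + s * phi A i x) * u (i :: x) = l * u x) :
    Tendsto (fun n => psiAvg A p q s n) atTop (𝓝 (Real.logb 2 l)) := by
  have hM : 0 < M := hm.trans_le ((hb []).1.trans (hb []).2)
  have hu0 : 0 < u [] := hm.trans_le (hb []).1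
  have hE := partSum_eigen A hp hu
  refine tendsto_growth (c₁ := 2 ^ (-|s|) * M⁻¹ * (2 ^ s * u []))
    (c₂ := 2 ^ |s| * m⁻¹ * (2 ^ s * u [])) hl (by positivity) (fun n => ?_) fun n => ?_
  · rw [mul_assoc, ← hE n, partSum, Finset.mul_sum]
    refine Finset.sum_le_sum fun w _ => ?_
    have hW := Real.rpow_nonneg (wordWeight_pos hp (List.ofFn w)).le q
    have hF := Real.rpow_nonneg (fro_nonneg (wordProd A (List.ofFn w) : Mat2)) s
    refine le_trans ?_ (mul_le_mul_of_nonneg_left (opNorm_rpow_bounds _ s).1 hW)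
    have h1 : M⁻¹ * u (List.ofFn w) ≤ 1 := by
      rw [inv_mul_le_iff₀ hM, mul_one]; exact (hb _).2
    have h2 := mul_le_mul_of_nonneg_left h1
      (mul_nonneg (mul_nonneg hW hF) (Real.rpow_nonneg zero_le_two (-|s|)))
    linarith
  · rw [mul_assoc (2 ^ |s| * m⁻¹), ← hE n, partSum, Finset.mul_sum]
    refine Finset.sum_le_sum fun w _ => ?_
    have hW := Real.rpow_nonneg (wordWeight_pos hp (List.ofFn w)).le q
    have hF := Real.rpow_nonneg (fro_nonneg (wordProd A (List.ofFn w) : Mat2)) s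
    refine (mul_le_mul_of_nonneg_left (opNorm_rpow_bounds _ s).2 hW).trans ?_
    have h1 : 1 ≤ m⁻¹ * u (List.ofFn w) := by
      rw [le_inv_mul_iff₀ hm, mul_one]; exact (hb _).1
    have h2 := mul_le_mul_of_nonneg_left h1
      (mul_nonneg (mul_nonneg hW hF) (Real.rpow_nonneg zero_le_two |s|))
    linarith

end Pressure
/-- the pressure Ψ(q,s) exists and is real analytic on ℝ². -/
theorem statement14 {ι : Type} [Fintype ι] [Nonempty ι]
    (A : ι → SL2) (hUH : UniformlyHyperbolic A)
    (p : ι → ℝ) (hp : ∀ i, 0 < p i) (hp1 : ∑ i : ι, p i = 1) :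
    ∃ Ψ : ℝ × ℝ → ℝ,
      (∀ q s : ℝ,
        Filter.Tendsto (fun n => psiAvg A p q s n) Filter.atTop (nhds (Ψ (q, s)))) ∧
      AnalyticOnNhd ℝ Ψ Set.univ := by
  obtain ⟨θ, ⟨hθ0, hθ1⟩, C₀, hC₀, hφ⟩ := phi_holder A hUH
  choose Λ hΛ hΛe using exists_analytic_eigenvalue hθ0 hθ1 hC₀ hφ (fun i => Real.log (p i))
  have hlim : ∀ y₀ : ℝ × ℝ, ∀ᶠ y in 𝓝 y₀,
      Tendsto (fun n => psiAvg A p y.1 y.2 n) atTop (𝓝 (Real.logb 2 (Λ y₀ y))) := fun y₀ => by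
    filter_upwards [hΛe y₀] with y hy
    obtain ⟨hl, f, m, hm, M, hb, hf⟩ := hy
    exact tendsto_psiAvg A hp hl hm hb hf
  refine ⟨fun y => Real.logb 2 (Λ y y), fun q s => (hlim (q, s)).self_of_nhds, fun y₀ _ => ?_⟩
  have hlog : AnalyticAt ℝ (fun y => Real.log (Λ y₀ y)) y₀ :=
    ((hΛ y₀).contDiffAt.log (hΛe y₀).self_of_nhds.1.ne').analyticAt
  have han : AnalyticAt ℝ (fun y => Real.log (Λ y₀ y) / Real.log 2) y₀ :=
    hlog.div analyticAt_const (Real.log_pos one_lt_two).ne'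
  refine han.congr ?_
  -- near `y₀` the branch of eigenvalues based at `y₀` gives the same pressure as the one based at `y`
  filter_upwards [hlim y₀] with y hy
  exact tendsto_nhds_unique hy (hlim y).self_of_nhds

end

end Paper
end
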